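/- Let κ > 1 and let X = (X_1,...,X_n) be an unconditional, isotropic random vector in ℝⁿ with density e^{-u(x)}, where the function (x_1,...,x_n) ↦ u(x_1^κ,...,x_n^κ) is convex on the positive orthant ℝⁿ₊. Let G be a standard Gaussian random variable and θ ∈ S^{n-1}. Then |P(θ·X ≥ t) − P(G ≥ t)| ≤ C_κ Σ_{k=1}^n |θ_k|³ for every t ∈ ℝ, where C_κ > 0 depends only on κ and not on n. -/

import Mathlib

open MeasureTheory ProbabilityTheory Real

namespace CLTU
open Set

lemma bm_compact {K L D : Set ℝ} (hK : IsCompact K) (hL : IsCompact L) (hKn : K.Nonempty)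
    (hLn : L.Nonempty) (h : ∀ a ∈ K, ∀ b ∈ L, a + b ∈ D) :
    volume K + volume L ≤ volume D := by
  obtain ⟨x, hx, hxm⟩ := hK.exists_isMaxOn hKn continuousOn_id
  obtain ⟨y, hy, hym⟩ := hL.exists_isMinOn hLn continuousOn_id
  have h1 : volume ((fun z => z + -y) ⁻¹' K) = volume K := measure_preimage_add_right _ _ _
  have h2 : volume ((fun z => z + -x) ⁻¹' L) = volume L := measure_preimage_add_right _ _ _
  have hmL : MeasurableSet ((fun z => z + -x) ⁻¹' L) :=
    (measurable_id.add_const _) hL.isClosed.measurableSet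
  rw [← h1, ← h2, ← measure_union₀ hmL.nullMeasurableSet]
  · apply measure_mono
    rintro z (hz | hz)
    · have := h _ hz _ hy
      simpa using this
    · have := h _ hx _ hz
      simpa using this
  · have : ((fun z => z + -y) ⁻¹' K) ∩ ((fun z => z + -x) ⁻¹' L) ⊆ {x + y} := by
      rintro z ⟨hz1, hz2⟩
      have a1 := hxm hz1
      have a2 := hym hz2
      simp at a1 a2
      simp
      linarith
    exact measure_mono_null this (by simp)

lemma bm1 {A B C : Set ℝ} (hA : MeasurableSet A) (hB : MeasurableSet B) (hAn : A.Nonempty)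
    (hBn : B.Nonempty) (h : ∀ a ∈ A, ∀ b ∈ B, (a + b) / 2 ∈ C) :
    volume A + volume B ≤ 2 * volume C := by
  have hD : volume ((fun z => (1/2 : ℝ) * z) ⁻¹' C) = 2 * volume C := by
    rw [Real.volume_preimage_mul_left (by norm_num)]
    norm_num
  rw [← hD]
  set D := ((fun z => (1/2 : ℝ) * z) ⁻¹' C)
  by_cases hT : volume D = ⊤
  · rw [hT]; exact le_top
  obtain ⟨a0, ha0⟩ := hAn
  obtain ⟨b0, hb0⟩ := hBn
  have key : ∀ K ⊆ A, IsCompact K → ∀ L ⊆ B, IsCompact L → volume K + volume L ≤ volume D := by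
    intro K hKA hK L hLB hL
    refine le_trans ?_ (bm_compact (K := insert a0 K) (L := insert b0 L) (hK.insert _) (hL.insert _)
      (insert_nonempty _ _) (insert_nonempty _ _) (D := D) ?_)
    · gcongr <;> exact subset_insert _ _
    · intro a ha b hb
      have ha' : a ∈ A := by
        rcases ha with rfl | ha
        exacts [ha0, hKA ha]
      have hb' : b ∈ B := by
        rcases hb with rfl | hb
        exacts [hb0, hLB hb]
      have := h a ha' b hb'
      simp only [D, mem_preimage]
      convert this using 1
      ring
  have key2 : ∀ L ⊆ B, IsCompact L → volume A + volume L ≤ volume D := by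
    intro L hLB hL
    have hLD : volume L ≤ volume D := le_trans (by simp) (key ∅ (empty_subset _) isCompact_empty L hLB hL)
    refine add_le_of_le_tsub_right_of_le hLD ?_
    rw [hA.measure_eq_iSup_isCompact]
    refine iSup_le fun K => iSup_le fun hKA => iSup_le fun hK => ?_
    exact ENNReal.le_sub_of_add_le_right hL.measure_ne_top (key K hKA hK L hLB hL)
  have hAD : volume A ≤ volume D := le_trans (by simp) (key2 ∅ (empty_subset _) isCompact_empty)
  refine add_le_of_le_tsub_left_of_le hAD ?_
  rw [hB.measure_eq_iSup_isCompact]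
  refine iSup_le fun K => iSup_le fun hKA => iSup_le fun hK => ?_
  exact ENNReal.le_sub_of_add_le_left (ne_top_of_le_ne_top hT hAD) (key2 K hKA hK)

/-- normalized version -/
lemma pl_norm {f g h : ℝ → ENNReal} (hf : Measurable f) (hg : Measurable g) (hh : Measurable h)
    (hf1 : ⨆ x, f x = 1) (hg1 : ⨆ x, g x = 1)
    (H : ∀ x y, f x * g y ≤ h ((x + y) / 2) ^ 2) :
    (∫⁻ x, f x) + (∫⁻ x, g x) ≤ 2 * ∫⁻ x, h x := by
  have lay : ∀ k : ℝ → ENNReal, Measurable k → (∀ x, k x ≤ 1) →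
      ∫⁻ x, k x = ∫⁻ t in Ioo (0:ℝ) 1, volume {x | ENNReal.ofReal t < k x} := by
    intro k hk hk1
    have e1 : ∀ x, k x = ENNReal.ofReal (k x).toReal := fun x =>
      (ENNReal.ofReal_toReal (ne_top_of_le_ne_top ENNReal.one_ne_top (hk1 x))).symm
    have e2 : ∫⁻ x, k x = ∫⁻ x, ENNReal.ofReal (k x).toReal := lintegral_congr e1
    rw [e2, lintegral_eq_lintegral_meas_lt _ (Filter.Eventually.of_forall fun x => ENNReal.toReal_nonneg)
      hk.ennreal_toReal.aemeasurable]
    have e3 : Ioi (0:ℝ) = Ioo 0 1 ∪ Ici 1 := (Ioo_union_Ici_eq_Ioi one_pos).symm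
    rw [e3, lintegral_union measurableSet_Ici]
    · have : ∫⁻ t in Ici (1:ℝ), volume {a | t < (k a).toReal} = 0 := by
        rw [setLIntegral_congr_fun (g := fun _ => 0) measurableSet_Ici]
        · simp
        · intro t ht
          have : {a | t < (k a).toReal} = ∅ := by
            ext a
            simp only [mem_ofPred_eq, mem_empty_iff_false, iff_false, not_lt]
            have : (k a).toReal ≤ 1 := by
              have := ENNReal.toReal_mono ENNReal.one_ne_top (hk1 a)
              simpa using this
            exact this.trans ht
          simp [this]
      rw [this, add_zero]
      refine setLIntegral_congr_fun measurableSet_Ioo ?_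
      intro t ht
      dsimp only
      congr 1
      ext a
      simp only [mem_ofPred_eq]
      rw [ENNReal.ofReal_lt_iff_lt_toReal ht.1.le (ne_top_of_le_ne_top ENNReal.one_ne_top (hk1 a))]
    · rw [Set.disjoint_left]
      intro t ht ht2
      exact absurd ht.2 (not_lt.mpr ht2)
  have hfl : ∀ x, f x ≤ 1 := fun x => hf1 ▸ le_iSup f x
  have hgl : ∀ x, g x ≤ 1 := fun x => hg1 ▸ le_iSup g x
  have hm : ∫⁻ x, min (h x) 1 ≤ ∫⁻ x, h x := lintegral_mono fun x => min_le_left _ _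
  refine le_trans ?_ (mul_le_mul_right hm 2)
  rw [lay f hf hfl, lay g hg hgl, lay _ (hh.min measurable_const) (fun x => min_le_right _ _)]
  have mm : ∀ k : ℝ → ENNReal, Measurable fun t : ℝ => volume {x | ENNReal.ofReal t < k x} := by
    intro k
    apply Antitone.measurable
    intro s t hst
    apply measure_mono
    intro x hx
    exact lt_of_le_of_lt (ENNReal.ofReal_le_ofReal hst) hx
  rw [← lintegral_add_left (mm f), ← lintegral_const_mul _ (mm _)]
  refine setLIntegral_mono' measurableSet_Ioo ?_
  intro t ht
  have ht1 : ENNReal.ofReal t < 1 := by simpa using ht.2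
  refine bm1 (measurableSet_lt measurable_const hf) (measurableSet_lt measurable_const hg) ?_ ?_ ?_
  · rw [← hf1] at ht1
    exact lt_iSup_iff.mp ht1
  · rw [← hg1] at ht1
    exact lt_iSup_iff.mp ht1
  · intro a ha b hb
    simp only [mem_ofPred_eq] at ha hb ⊢
    refine lt_min ?_ ht1
    have h1 := (ENNReal.mul_lt_mul ha hb).trans_le (H a b)
    rw [← sq] at h1
    by_contra hc
    exact absurd h1 (not_lt.mpr (pow_le_pow_left₀ zero_le (not_lt.mp hc) 2))

lemma amgm_enn (a b : ENNReal) : 4 * (a * b) ≤ (a + b) ^ 2 := by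
  by_cases ha : a = ⊤
  · simp [ha]
  by_cases hb : b = ⊤
  · simp [hb]
  lift a to NNReal using ha
  lift b to NNReal using hb
  norm_cast
  rw [← NNReal.coe_le_coe]
  push_cast
  nlinarith [sq_nonneg ((a:ℝ) - b)]

lemma pl_bdd {f g h : ℝ → ENNReal} (hf : Measurable f) (hg : Measurable g) (hh : Measurable h)
    (hf1 : ⨆ x, f x ≠ ⊤) (hg1 : ⨆ x, g x ≠ ⊤)
    (H : ∀ x y, f x * g y ≤ h ((x + y) / 2) ^ 2) :
    (∫⁻ x, f x) * ∫⁻ x, g x ≤ (∫⁻ x, h x) ^ 2 := by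
  set A := ⨆ x, f x with hA
  set B := ⨆ x, g x with hB
  by_cases hA0 : A = 0
  · have : ∀ x, f x = 0 := by simpa [hA] using hA0
    simp [this]
  by_cases hB0 : B = 0
  · have : ∀ x, g x = 0 := by simpa [hB] using hB0
    simp [this]
  -- square roots
  set a := A ^ (1/2 : ℝ) with ha
  set b := B ^ (1/2 : ℝ) with hb
  have haA : a * a = A := by
    rw [ha, ← ENNReal.rpow_add _ _ hA0 hf1]; norm_num
  have hbB : b * b = B := by
    rw [hb, ← ENNReal.rpow_add _ _ hB0 hg1]; norm_num
  have ha0 : a ≠ 0 := by rintro h; rw [h] at haA; simp at haA; exact hA0 haA.symm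
  have hb0 : b ≠ 0 := by rintro h; rw [h] at hbB; simp at hbB; exact hB0 hbB.symm
  have hat : a ≠ ⊤ := by rintro h; rw [h] at haA; simp at haA; exact hf1 haA.symm
  have hbt : b ≠ ⊤ := by rintro h; rw [h] at hbB; simp at hbB; exact hg1 hbB.symm
  have inv : A⁻¹ * B⁻¹ = (a⁻¹ * b⁻¹) ^ 2 := by
    rw [← haA, ← hbB, ENNReal.mul_inv (Or.inl ha0) (Or.inl hat), ENNReal.mul_inv (Or.inl hb0) (Or.inl hbt)]
    ring
  have key := pl_norm (f := fun x => A⁻¹ * f x) (g := fun x => B⁻¹ * g x)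
    (h := fun x => (a⁻¹ * b⁻¹) * h x) (hf.const_mul _) (hg.const_mul _) (hh.const_mul _)
    (by rw [← ENNReal.mul_iSup, ← hA, ENNReal.inv_mul_cancel hA0 hf1])
    (by rw [← ENNReal.mul_iSup, ← hB, ENNReal.inv_mul_cancel hB0 hg1])
    (by
      intro x y
      calc A⁻¹ * f x * (B⁻¹ * g y) = (A⁻¹ * B⁻¹) * (f x * g y) := by ring
        _ ≤ (A⁻¹ * B⁻¹) * h ((x + y) / 2) ^ 2 := by gcongr; exact H x y
        _ = _ := by rw [inv]; ring)
  rw [lintegral_const_mul _ hf, lintegral_const_mul _ hg, lintegral_const_mul _ hh] at key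
  have k2 := (amgm_enn _ _).trans (pow_le_pow_left₀ zero_le key 2)
  have k3 : 4 * ((A⁻¹ * B⁻¹) * ((∫⁻ x, f x) * ∫⁻ x, g x)) ≤ 4 * ((A⁻¹ * B⁻¹) * (∫⁻ x, h x) ^ 2) := by
    calc _ = 4 * (A⁻¹ * (∫⁻ x, f x) * (B⁻¹ * ∫⁻ x, g x)) := by ring
      _ ≤ _ := k2
      _ = _ := by rw [inv]; ring
  rw [ENNReal.mul_le_mul_iff_right (by norm_num) (by norm_num),
    ENNReal.mul_le_mul_iff_right] at k3
  · exact k3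
  · exact mul_ne_zero (ENNReal.inv_ne_zero.mpr hf1) (ENNReal.inv_ne_zero.mpr hg1)
  · exact ENNReal.mul_ne_top (ENNReal.inv_ne_top.mpr hA0) (ENNReal.inv_ne_top.mpr hB0)

lemma iSup_min_nat (a : ENNReal) : ⨆ k : ℕ, min a (k : ENNReal) = a := by
  rw [← inf_iSup_eq, ENNReal.iSup_natCast, inf_top_eq]

lemma pl1 {f g h : ℝ → ENNReal} (hf : Measurable f) (hg : Measurable g) (hh : Measurable h)
    (H : ∀ x y, f x * g y ≤ h ((x + y) / 2) ^ 2) :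
    (∫⁻ x, f x) * ∫⁻ x, g x ≤ (∫⁻ x, h x) ^ 2 := by
  have tr : ∀ k : ℝ → ENNReal, Measurable k → ∫⁻ x, k x = ⨆ m : ℕ, ∫⁻ x, min (k x) (m : ENNReal) := by
    intro k hk
    rw [← lintegral_iSup]
    · simp_rw [iSup_min_nat]
    · exact fun m => hk.min measurable_const
    · intro m m' hm x
      exact min_le_min le_rfl (by exact_mod_cast hm)
  rw [tr f hf, tr g hg, ENNReal.iSup_mul]
  refine iSup_le fun m => ?_
  rw [ENNReal.mul_iSup]
  refine iSup_le fun m' => ?_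
  refine pl_bdd (hf.min measurable_const) (hg.min measurable_const) hh ?_ ?_ ?_
  · exact ne_top_of_le_ne_top (ENNReal.natCast_ne_top m) (iSup_le fun x => min_le_right _ _)
  · exact ne_top_of_le_ne_top (ENNReal.natCast_ne_top m') (iSup_le fun x => min_le_right _ _)
  · intro x y
    exact (mul_le_mul' (min_le_left _ _) (min_le_left _ _)).trans (H x y)

end CLTU

namespace CLTU
open Set

/-- the weight -/
noncomputable def wt (κ a b : ℝ) : ℝ := ((((a + b) / 2) ^ 2) / (a * b)) ^ ((κ - 1) / 2)

lemma wt_id {κ a b : ℝ} (ha : 0 < a) (hb : 0 < b) :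
    wt κ a b ^ 2 * (a ^ (κ - 1) * b ^ (κ - 1)) = (((a + b) / 2) ^ (κ - 1)) ^ 2 := by
  unfold wt
  have hm : 0 < (a + b) / 2 := by positivity
  rw [← Real.mul_rpow ha.le hb.le, ← Real.rpow_natCast, ← Real.rpow_mul (by positivity),
    ← Real.rpow_natCast (((a + b) / 2) ^ (κ - 1)), ← Real.rpow_mul hm.le]
  have : (κ - 1) / 2 * ((2:ℕ) : ℝ) = κ - 1 := by push_cast; ring
  rw [this, ← Real.mul_rpow (by positivity) (by positivity), div_mul_cancel₀ _ (by positivity),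
    ← Real.rpow_natCast, ← Real.rpow_mul hm.le, mul_comm (κ - 1)]

lemma cov_pow {κ : ℝ} (hκ : 1 < κ) (f : ℝ → ENNReal) :
    ∫⁻ x in Ioi (0:ℝ), f x = ∫⁻ a, (Ioi (0:ℝ)).indicator
      (fun a => ENNReal.ofReal (κ * a ^ (κ - 1)) * f (a ^ κ)) a := by
  rw [lintegral_indicator measurableSet_Ioi]
  have him : (fun a : ℝ => a ^ κ) '' Ioi 0 = Ioi 0 := by
    ext y
    constructor
    · rintro ⟨a, ha, rfl⟩
      exact Real.rpow_pos_of_pos ha _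
    · intro hy
      refine ⟨y ^ (1/κ), Real.rpow_pos_of_pos hy _, ?_⟩
      simp only
      rw [← Real.rpow_mul (le_of_lt hy), one_div_mul_cancel (by linarith), Real.rpow_one]
  have := lintegral_image_eq_lintegral_abs_deriv_mul (s := Ioi (0:ℝ)) (f := fun a : ℝ => a ^ κ)
    (f' := fun a => κ * a ^ (κ - 1)) measurableSet_Ioi
    (fun x hx => (Real.hasDerivAt_rpow_const (Or.inl (ne_of_gt hx))).hasDerivWithinAt)
    (by
      intro a ha b hb hab
      exact (Real.rpow_left_inj (le_of_lt ha) (le_of_lt hb) (by linarith)).mp hab) f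
  rw [him] at this
  rw [this]
  refine setLIntegral_congr_fun measurableSet_Ioi ?_
  intro a ha
  have : 0 ≤ κ * a ^ (κ - 1) := mul_nonneg (by linarith) (Real.rpow_nonneg (le_of_lt ha) _)
  simp only [abs_of_nonneg this]

lemma pl_pow {κ : ℝ} (hκ : 1 < κ) {f g h : ℝ → ENNReal} (hf : Measurable f) (hg : Measurable g)
    (hh : Measurable h)
    (H : ∀ a b, 0 < a → 0 < b → f (a ^ κ) * g (b ^ κ) ≤
      (ENNReal.ofReal (wt κ a b) * h (((a + b) / 2) ^ κ)) ^ 2) :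
    (∫⁻ x in Ioi (0:ℝ), f x) * ∫⁻ x in Ioi (0:ℝ), g x ≤ (∫⁻ x in Ioi (0:ℝ), h x) ^ 2 := by
  rw [cov_pow hκ f, cov_pow hκ g, cov_pow hκ h]
  have hm : ∀ k : ℝ → ENNReal, Measurable k → Measurable ((Ioi (0:ℝ)).indicator
      (fun a => ENNReal.ofReal (κ * a ^ (κ - 1)) * k (a ^ κ))) := by
    intro k hk
    refine Measurable.indicator ?_ measurableSet_Ioi
    exact (Measurable.ennreal_ofReal (by fun_prop)).mul (hk.comp (by fun_prop))
  refine pl1 (hm f hf) (hm g hg) (hm h hh) ?_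
  intro a b
  by_cases ha : 0 < a
  swap
  · simp [indicator_of_notMem, ha]
  by_cases hb : 0 < b
  swap
  · simp [indicator_of_notMem, hb]
  have hm : 0 < (a + b) / 2 := by positivity
  have hκ0 : 0 < κ := by linarith
  rw [indicator_of_mem (mem_Ioi.mpr ha), indicator_of_mem (mem_Ioi.mpr hb),
    indicator_of_mem (mem_Ioi.mpr hm)]
  have e : ENNReal.ofReal (κ * a ^ (κ - 1)) * ENNReal.ofReal (κ * b ^ (κ - 1)) *
      ENNReal.ofReal (wt κ a b) ^ 2 = ENNReal.ofReal (κ * ((a + b) / 2) ^ (κ - 1)) ^ 2 := by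
    have w0 : 0 ≤ wt κ a b := Real.rpow_nonneg (by positivity) _
    rw [← ENNReal.ofReal_mul (by positivity), ← ENNReal.ofReal_pow w0,
      ← ENNReal.ofReal_mul (by positivity), ← ENNReal.ofReal_pow (by positivity)]
    congr 1
    rw [mul_pow, ← wt_id ha hb]
    ring
  calc _ = ENNReal.ofReal (κ * a ^ (κ - 1)) * ENNReal.ofReal (κ * b ^ (κ - 1)) *
        (f (a ^ κ) * g (b ^ κ)) := by ring
    _ ≤ ENNReal.ofReal (κ * a ^ (κ - 1)) * ENNReal.ofReal (κ * b ^ (κ - 1)) *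
        (ENNReal.ofReal (wt κ a b) * h (((a + b) / 2) ^ κ)) ^ 2 := by
        gcongr; exact H a b ha hb
    _ = _ := by rw [mul_pow, ← mul_assoc, e]; ring

/-- the orthant measure -/
noncomputable def om (n : ℕ) : Measure (Fin n → ℝ) :=
  Measure.pi (fun _ : Fin n => (volume : Measure ℝ).restrict (Ioi 0))

lemma lint_succ {n : ℕ} {f : (Fin (n+1) → ℝ) → ENNReal} (hf : Measurable f) :
    ∫⁻ x, f x ∂(om (n+1)) = ∫⁻ s in Ioi (0:ℝ), ∫⁻ x, f (Fin.cons s x) ∂(om n) := by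
  have hp := (measurePreserving_piFinSuccAbove
    (fun _ : Fin (n+1) => (volume : Measure ℝ).restrict (Ioi 0)) 0).symm
  unfold om
  rw [← hp.lintegral_comp hf, lintegral_prod]
  · simp [MeasurableEquiv.piFinSuccAbove, Fin.consEquiv]
  · exact (hf.comp (MeasurableEquiv.measurable _)).aemeasurable

lemma meas_cons (n : ℕ) : Measurable fun p : ℝ × (Fin n → ℝ) => (Fin.cons p.1 p.2 : Fin (n+1) → ℝ) := by
  rw [measurable_pi_iff]
  intro i
  refine Fin.cases ?_ ?_ i
  · simpa using measurable_fst
  · intro j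
    simp only [Fin.cons_succ]
    fun_prop

lemma pl_n {κ : ℝ} (hκ : 1 < κ) : ∀ (n : ℕ) {f g h : (Fin n → ℝ) → ENNReal}
    (_ : Measurable f) (_ : Measurable g) (_ : Measurable h)
    (_ : ∀ a b : Fin n → ℝ, (∀ i, 0 < a i) → (∀ i, 0 < b i) →
      f (fun i => a i ^ κ) * g (fun i => b i ^ κ) ≤
      ((∏ i, ENNReal.ofReal (wt κ (a i) (b i))) * h (fun i => ((a i + b i) / 2) ^ κ)) ^ 2),
    (∫⁻ x, f x ∂(om n)) * ∫⁻ x, g x ∂(om n) ≤ (∫⁻ x, h x ∂(om n)) ^ 2 := by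
  intro n
  induction n with
  | zero =>
    intro f g h hf hg hh H
    unfold om
    rw [Measure.pi_of_empty _ 0]
    simp only [lintegral_dirac]
    have := H 0 0 (fun i => i.elim0) (fun i => i.elim0)
    have e : ∀ (k : (Fin 0 → ℝ) → ENNReal) (v : Fin 0 → ℝ), k v = k 0 :=
      fun k v => congrArg k (Subsingleton.elim _ _)
    rw [e f, e g, e h] at this
    simpa using this
  | succ n ih =>
    intro f g h hf hg hh H
    rw [lint_succ hf, lint_succ hg, lint_succ hh]
    have hmm : ∀ k : (Fin (n+1) → ℝ) → ENNReal, Measurable k →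
        Measurable fun s : ℝ => ∫⁻ x, k (Fin.cons s x) ∂(om n) := by
      intro k hk
      have : SigmaFinite (om n) := by unfold om; infer_instance
      exact Measurable.lintegral_prod_right' (hk.comp (meas_cons n))
    have hcs : ∀ (k : (Fin (n+1) → ℝ) → ENNReal), Measurable k → ∀ s : ℝ,
        Measurable fun x : Fin n → ℝ => k (Fin.cons s x) := by
      intro k hk s
      exact hk.comp ((meas_cons n).comp measurable_prodMk_left)
    refine pl_pow hκ (hmm f hf) (hmm g hg) (hmm h hh) ?_
    intro a b ha hb
    rw [← lintegral_const_mul _ (hcs h hh _)]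
    refine ih (hcs f hf _) (hcs g hg _) ((hcs h hh _).const_mul _) ?_
    intro a' b' ha' hb'
    have := H (Fin.cons a a') (Fin.cons b b')
      (fun i => by refine Fin.cases ?_ ?_ i <;> simp [ha, ha'])
      (fun i => by refine Fin.cases ?_ ?_ i <;> simp [hb, hb'])
    have e : ∀ (c : ℝ) (c' : Fin n → ℝ), (fun i => (Fin.cons c c' : Fin (n+1) → ℝ) i ^ κ) =
        Fin.cons (c ^ κ) (fun i => c' i ^ κ) := by
      intro c c'
      funext i
      refine Fin.cases ?_ ?_ i <;> simp
    have e2 : (fun i => (((Fin.cons a a' : Fin (n+1) → ℝ) i + (Fin.cons b b' : Fin (n+1) → ℝ) i) / 2) ^ κ) =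
        Fin.cons (((a + b) / 2) ^ κ) (fun i => ((a' i + b' i) / 2) ^ κ) := by
      funext i
      refine Fin.cases ?_ ?_ i <;> simp
    rw [e, e, e2, Fin.prod_univ_succ] at this
    simp only [Fin.cons_zero, Fin.cons_succ] at this
    refine this.trans (le_of_eq ?_)
    ring

end CLTU

namespace CLTU
open Set

/-- gaussian density -/
noncomputable def ph (x : ℝ) : ℝ := (√(2 * π))⁻¹ * Real.exp (-(x ^ 2 / 2))

/-- gaussian tail -/
noncomputable def Q (x : ℝ) : ℝ := ∫ y in Ioi x, ph y

lemma ph_eq : ph = gaussianPDFReal 0 1 := by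
  funext x
  simp [ph, gaussianPDFReal, neg_div]

lemma ph_pos (x : ℝ) : 0 < ph x := by unfold ph; positivity

lemma ph_int : Integrable ph := by rw [ph_eq]; exact integrable_gaussianPDFReal 0 1

lemma ph_cont : Continuous ph := by unfold ph; fun_prop

lemma Q_gauss (t : ℝ) : ((gaussianReal 0 1) {x | t ≤ x}).toReal = Q t := by
  have : {x : ℝ | t ≤ x} = Ici t := rfl
  rw [this, gaussianReal_apply_eq_integral _ (by norm_num), ENNReal.toReal_ofReal]
  · rw [integral_Ici_eq_integral_Ioi, Q, ph_eq]
  · exact integral_nonneg fun x => gaussianPDFReal_nonneg _ _ _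

lemma Q_nonneg (t : ℝ) : 0 ≤ Q t := integral_nonneg fun x => (ph_pos x).le

lemma Q_anti : Antitone Q := by
  intro s t h
  exact setIntegral_mono_set ph_int.integrableOn (Filter.Eventually.of_forall fun x => (ph_pos x).le)
    (Ioi_subset_Ioi h).eventuallyLE

lemma Q_symm (t : ℝ) : Q t + Q (-t) = 1 := by
  have h1 : Q (-t) = ∫ y in Iic t, ph y := by
    rw [Q, ← integral_comp_neg_Iic]
    simp [ph]
  rw [h1, Q, add_comm, intervalIntegral.integral_Iic_add_Ioi ph_int.integrableOn ph_int.integrableOn, ph_eq]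
  exact integral_gaussianPDFReal_eq_one 0 (by norm_num)

lemma Q_le_one (t : ℝ) : Q t ≤ 1 := by linarith [Q_symm t, Q_nonneg (-t)]

lemma Q_deriv (t : ℝ) : HasDerivAt Q (-ph t) t := by
  have h1 : ∀ x, Q x = Q 0 - ∫ y in (0:ℝ)..x, ph y := by
    intro x
    have := intervalIntegral.integral_interval_add_Ioi (a := 0) (b := x) ph_int.integrableOn ph_int.integrableOn
    unfold Q
    linarith
  have h2 : Q = fun x => Q 0 - ∫ y in (0:ℝ)..x, ph y := funext h1
  rw [h2]
  have := intervalIntegral.integral_hasDerivAt_right (a := 0) (b := t) (f := ph)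
    (ph_cont.intervalIntegrable _ _) (ph_cont.stronglyMeasurableAtFilter _ _) ph_cont.continuousAt
  simpa using this.const_sub (Q 0)

lemma ph_deriv (t : ℝ) : HasDerivAt ph (-(t * ph t)) t := by
  unfold ph
  have : HasDerivAt (fun x : ℝ => -(x ^ 2 / 2)) (-t) t := by
    have := ((hasDerivAt_pow 2 t).div_const 2).neg
    exact this.congr_deriv (by simp)
  exact ((this.exp).const_mul _).congr_deriv (by ring)

lemma mills {t : ℝ} (ht : 0 < t) : t * Q t ≤ ph t := by
  have hlim : Filter.Tendsto (fun x => - ph x) Filter.atTop (nhds 0) := by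
    have : Filter.Tendsto ph Filter.atTop (nhds 0) := by
      unfold ph
      rw [← mul_zero ((√(2 * π))⁻¹)]
      refine Filter.Tendsto.const_mul _ ?_
      refine Real.tendsto_exp_atBot.comp ?_
      refine Filter.tendsto_neg_atTop_atBot.comp ?_
      exact (Filter.tendsto_pow_atTop (by norm_num)).atTop_div_const (by norm_num)
    simpa using this.neg
  have hd : ∀ x ∈ Ioi t, HasDerivAt (fun x => - ph x) (x * ph x) x := by
    intro x _
    exact (ph_deriv x).neg.congr_deriv (by simp)
  have hnn : ∀ x ∈ Ioi t, 0 ≤ x * ph x := fun x hx => mul_nonneg (ht.le.trans (le_of_lt hx)) (ph_pos x).le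
  have hc : ContinuousWithinAt (fun x => - ph x) (Ici t) t := ph_cont.neg.continuousWithinAt
  have hi := integrableOn_Ioi_deriv_of_nonneg hc hd hnn hlim
  have he := integral_Ioi_of_hasDerivAt_of_nonneg hc hd hnn hlim
  have : t * Q t ≤ ∫ x in Ioi t, x * ph x := by
    rw [Q, ← integral_const_mul]
    refine setIntegral_mono_on (ph_int.integrableOn.const_mul _) hi measurableSet_Ioi ?_
    intro x hx
    exact mul_le_mul_of_nonneg_right (le_of_lt hx) (ph_pos x).le
  linarith

/-- Stein solution -/
noncomputable def sf (t w : ℝ) : ℝ := (ph w)⁻¹ * (Q (-(min w t)) * Q (max w t))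

noncomputable def sgf (t w : ℝ) : ℝ := w * sf t w + ((if w < t then 1 else 0) - (1 - Q t))

lemma sf_nonneg (t w : ℝ) : 0 ≤ sf t w :=
  mul_nonneg (inv_nonneg.mpr (ph_pos w).le) (mul_nonneg (Q_nonneg _) (Q_nonneg _))

lemma sf_le (t w : ℝ) : sf t w ≤ (ph |w|)⁻¹ * Q |w| := by
  have h0 : ph |w| = ph w := by simp [ph]
  rw [h0]
  unfold sf
  refine mul_le_mul_of_nonneg_left ?_ (inv_nonneg.mpr (ph_pos w).le)
  rcases le_total 0 w with hw | hw
  · rw [abs_of_nonneg hw]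
    calc _ ≤ 1 * Q w := mul_le_mul (Q_le_one _) (Q_anti (le_max_left _ _)) (Q_nonneg _) zero_le_one
      _ = _ := one_mul _
  · rw [abs_of_nonpos hw]
    calc _ ≤ Q (-w) * 1 := mul_le_mul (Q_anti (by simp)) (Q_le_one _) (Q_nonneg _) (Q_nonneg _)
      _ = _ := mul_one _

lemma w_sf_le (t w : ℝ) : |w| * sf t w ≤ 1 := by
  rcases eq_or_ne w 0 with rfl | hw
  · simp
  · have h := mills (abs_pos.mpr hw)
    have h2 := mul_le_mul_of_nonneg_left (sf_le t w) (abs_nonneg w)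
    refine h2.trans ?_
    rw [mul_left_comm, inv_mul_le_iff₀ (ph_pos _)]
    linarith

lemma sf_le6 (t w : ℝ) : sf t w ≤ 6 := by
  by_cases h : 1 ≤ |w|
  · have := w_sf_le t w
    nlinarith [sf_nonneg t w]
  · push Not at h
    refine (sf_le t w).trans ?_
    have h1 : (ph |w|)⁻¹ ≤ 6 := by
      have : (ph |w|)⁻¹ = √(2 * π) * Real.exp (w ^ 2 / 2) := by
        unfold ph
        rw [mul_inv, inv_inv, ← Real.exp_neg, neg_neg, sq_abs]
      rw [this]
      have a1 : √(2 * π) ≤ 3 := by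
        rw [Real.sqrt_le_left (by norm_num)]
        nlinarith [Real.pi_lt_d2]
      have a2 : Real.exp (w ^ 2 / 2) ≤ 2 := by
        have b1 : w ^ 2 / 2 ≤ 1 / 2 := by
          have : w ^ 2 ≤ 1 := (sq_le_one_iff_abs_le_one w).mpr h.le
          linarith
        have b2 : Real.exp (1/2) ≤ 2 := by
          have : Real.exp (1/2) ^ 2 ≤ 2 ^ 2 := by
            rw [← Real.exp_nat_mul]
            norm_num
            linarith [Real.exp_one_lt_d9]
          exact le_of_sq_le_sq this (by norm_num)
        exact (Real.exp_le_exp.mpr b1).trans b2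
      calc _ ≤ (3:ℝ) * 2 := mul_le_mul a1 a2 (Real.exp_nonneg _) (by norm_num)
        _ = 6 := by norm_num
    calc _ ≤ (6:ℝ) * 1 := mul_le_mul h1 (Q_le_one _) (Q_nonneg _) (by norm_num)
      _ = 6 := by norm_num

lemma sgf_le (t w : ℝ) : |sgf t w| ≤ 6 := by
  have h1 : |w * sf t w| ≤ 1 := by
    rw [abs_mul, abs_of_nonneg (sf_nonneg t w)]; exact w_sf_le t w
  have h2 := Q_le_one t
  have h3 := Q_nonneg t
  unfold sgf
  rw [abs_le] at *
  split_ifs <;> constructor <;> linarith [h1.1, h1.2]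

lemma sf_cont (t : ℝ) : Continuous (sf t) := by
  have hQ : Continuous Q := continuous_iff_continuousAt.mpr fun x => (Q_deriv x).continuousAt
  unfold sf
  refine Continuous.mul (ph_cont.inv₀ fun x => (ph_pos x).ne') ?_
  fun_prop

lemma phinv_deriv (w : ℝ) : HasDerivAt (fun w => (ph w)⁻¹) (w * (ph w)⁻¹) w := by
  have := (ph_pos w).ne'
  exact ((ph_deriv w).inv (ph_pos w).ne').congr_deriv (by field_simp)

lemma sf_deriv (t w : ℝ) : HasDerivWithinAt (sf t) (sgf t w) (Ici w) w := by
  have hp := (ph_pos w).ne'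
  by_cases h : w < t
  · have h1 : HasDerivAt (fun x => Q (-x)) (ph w) w := by
      have := (Q_deriv (-w)).comp w (hasDerivAt_neg w)
      exact this.congr_deriv (by simp [ph])
    have h2 := (phinv_deriv w).mul (h1.mul_const (Q t))
    have h3 : HasDerivAt (sf t) (sgf t w) w := by
      have e : (sf t) =ᶠ[nhds w] ((fun w => (ph w)⁻¹) * fun x => Q (-x) * Q t) := by
        filter_upwards [Iio_mem_nhds h] with x hx
        have hx' : x ≤ t := le_of_lt hx
        simp [sf, min_eq_left hx', max_eq_right hx']
      refine HasDerivAt.congr_of_eventuallyEq ?_ e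
      refine h2.congr_deriv ?_
      unfold sgf sf
      rw [min_eq_left h.le, max_eq_right h.le, if_pos h]
      field_simp
      ring
    exact h3.hasDerivWithinAt
  · push Not at h
    have h2 := (phinv_deriv w).mul ((Q_deriv w).const_mul (Q (-t)))
    have e : ∀ x ∈ Ici w, sf t x = ((fun w => (ph w)⁻¹) * fun x => Q (-t) * Q x) x := by
      intro x hx
      have hx' : t ≤ x := h.trans hx
      simp [sf, min_eq_right hx', max_eq_left hx']
    refine HasDerivWithinAt.congr (f := ((fun w => (ph w)⁻¹) * fun x => Q (-t) * Q x)) ?_ e (e w self_mem_Ici)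
    refine h2.hasDerivWithinAt.congr_deriv ?_
    unfold sgf sf
    rw [min_eq_right h, max_eq_left h, if_neg (not_lt.mpr h)]
    have := Q_symm t
    have e : 1 - Q t = Q (-t) := by linarith
    rw [e]
    field_simp
    ring

lemma sf_lip_seg (t : ℝ) {p q y C : ℝ} (hpq : p ≤ q) (h : ∀ z ∈ Icc p q, |sgf t z - y| ≤ C) :
    |sf t q - sf t p - (q - p) * y| ≤ C * (q - p) := by
  have := norm_image_sub_le_of_norm_deriv_right_le_segment (f := fun x => sf t x - x * y)
    (f' := fun x => sgf t x - y) (a := p) (b := q) (C := C)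
    (((sf_cont t).sub (continuous_id.mul continuous_const)).continuousOn)
    (fun x _ => by
      have := (sf_deriv t x).sub (((hasDerivAt_id x).mul_const y).hasDerivWithinAt (s := Ici x))
      simpa using! this)
    (fun x hx => h x ⟨hx.1, hx.2.le⟩) q ⟨hpq, le_rfl⟩
  rw [Real.norm_eq_abs] at this
  convert this using 2
  ring

lemma sf_lip (t p q : ℝ) : |sf t q - sf t p| ≤ 6 * |q - p| := by
  rcases le_total p q with h | h
  · have := sf_lip_seg t (y := 0) (C := 6) h (fun z _ => by simpa using sgf_le t z)
    rw [abs_of_nonneg (sub_nonneg.mpr h)]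
    simpa using this
  · have := sf_lip_seg t (y := 0) (C := 6) h (fun z _ => by simpa using sgf_le t z)
    rw [abs_sub_comm, abs_sub_comm q p, abs_of_nonneg (sub_nonneg.mpr h)]
    simpa using this

lemma sf_key (t W d : ℝ) : |sf t W - sf t (W - d) - d * sgf t W| ≤
    |d| * (6 * |d| * (1 + |W|) + 12 * (if |W - t| ≤ |d| then 1 else 0)) := by
  split_ifs with h
  · have h1 := sf_lip t (W - d) W
    have h2 := sgf_le t W
    have h3 : |d * sgf t W| ≤ |d| * 6 := by rw [abs_mul]; gcongr
    have h4 := abs_sub (sf t W - sf t (W - d)) (d * sgf t W)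
    have h5 : 0 ≤ |d| * (6 * |d| * (1 + |W|)) := by positivity
    have h6 : W - (W - d) = d := by ring
    rw [h6] at h1
    nlinarith
  · push Not at h
    have hz : ∀ z, |z - W| ≤ |d| → |sgf t z - sgf t W| ≤ 6 * |d| * (1 + |W|) := by
      intro z hz
      have e : (if z < t then (1:ℝ) else 0) = if W < t then 1 else 0 := by
        congr 1
        rw [eq_iff_iff]
        rw [abs_le] at hz
        rcases lt_abs.mp h with h | h
        · constructor <;> intro <;> linarith
        · constructor <;> intro <;> linarith
      unfold sgf
      rw [e]
      have : z * sf t z + ((if W < t then (1:ℝ) else 0) - (1 - Q t)) - (W * sf t W + ((if W < t then 1 else 0) - (1 - Q t)))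
        = (z - W) * sf t z + W * (sf t z - sf t W) := by ring
      rw [this]
      refine (abs_add_le _ _).trans ?_
      rw [abs_mul, abs_mul, abs_of_nonneg (sf_nonneg t z)]
      have a1 := sf_le6 t z
      have a2 := sf_lip t W z
      have a3 : |z - W| * sf t z ≤ |d| * 6 := mul_le_mul hz a1 (sf_nonneg _ _) (abs_nonneg _)
      have a4 : |W| * |sf t z - sf t W| ≤ |W| * (6 * |d|) := by
        refine mul_le_mul_of_nonneg_left (a2.trans ?_) (abs_nonneg _)
        gcongr
      linarith
    rcases le_total 0 d with hd | hd
    · have := sf_lip_seg t (p := W - d) (q := W) (y := sgf t W) (C := 6 * |d| * (1 + |W|)) (by linarith)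
        (fun z hz' => hz z (by rw [abs_of_nonneg hd, abs_le]; constructor <;> linarith [hz'.1, hz'.2]))
      have e : W - (W - d) = |d| := by rw [abs_of_nonneg hd]; ring
      rw [e] at this
      nth_rewrite 1 [abs_of_nonneg hd] at this
      linarith
    · have := sf_lip_seg t (p := W) (q := W - d) (y := sgf t W) (C := 6 * |d| * (1 + |W|)) (by linarith)
        (fun z hz' => hz z (by rw [abs_of_nonpos hd, abs_le]; constructor <;> linarith [hz'.1, hz'.2]))
      have e : (W - d) - W = |d| := by rw [abs_of_nonpos hd]; ring
      rw [e] at this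
      nth_rewrite 1 [abs_of_nonpos hd] at this
      rw [← abs_neg]
      have e2 : -(sf t W - sf t (W - d) - d * sgf t W) = sf t (W - d) - sf t W - -d * sgf t W := by ring
      rw [e2]
      linarith

end CLTU

namespace CLTU
open Set Finset
open scoped BigOperators

/-- sign -/
def sg {n : ℕ} (e : Fin n → Bool) (i : Fin n) : ℝ := if e i then 1 else -1

def fl {n : ℕ} (j : Fin n) (e : Fin n → Bool) : Fin n → Bool := Function.update e j (!e j)

lemma fl_fl {n : ℕ} (j : Fin n) (e : Fin n → Bool) : fl j (fl j e) = e := by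
  unfold fl; simp

lemma sg_fl_self {n : ℕ} (j : Fin n) (e : Fin n → Bool) : sg (fl j e) j = - sg e j := by
  unfold sg fl
  cases h : e j <;> simp [h]

lemma sg_fl_ne {n : ℕ} {i j : Fin n} (h : i ≠ j) (e : Fin n → Bool) : sg (fl j e) i = sg e i := by
  unfold sg fl
  simp [h]

lemma sg_sq {n : ℕ} (e : Fin n → Bool) (i : Fin n) : sg e i ^ 2 = 1 := by
  unfold sg; split_ifs <;> norm_num

lemma sg_abs {n : ℕ} (e : Fin n → Bool) (i : Fin n) : |sg e i| = 1 := by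
  unfold sg; split_ifs <;> norm_num

/-- Rademacher sum -/
def RW {n : ℕ} (a : Fin n → ℝ) (e : Fin n → Bool) : ℝ := ∑ i, a i * sg e i

lemma RW_fl {n : ℕ} (a : Fin n → ℝ) (e : Fin n → Bool) (j : Fin n) :
    RW a (fl j e) = RW a e - 2 * (a j * sg e j) := by
  unfold RW
  rw [← Finset.add_sum_erase _ _ (Finset.mem_univ j), ← Finset.add_sum_erase _ (fun i => a i * sg e i) (Finset.mem_univ j),
    sg_fl_self]
  have : ∑ x ∈ univ.erase j, a x * sg (fl j e) x = ∑ x ∈ univ.erase j, a x * sg e x := by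
    refine Finset.sum_congr rfl fun x hx => ?_
    rw [sg_fl_ne (Finset.ne_of_mem_erase hx)]
  rw [this]; ring

lemma expect_fl {n : ℕ} (j : Fin n) (F : (Fin n → Bool) → ℝ) : 𝔼 e, F (fl j e) = 𝔼 e, F e :=
  Fintype.expect_equiv (Function.Involutive.toPerm (fl j) (fl_fl j)) _ _ (fun _ => rfl)

lemma expect_W {n : ℕ} (a : Fin n → ℝ) (f : ℝ → ℝ) :
    𝔼 e, RW a e * f (RW a e) =
      ∑ j, 𝔼 e, (1/2) * (a j * sg e j * (f (RW a e) - f (RW a e - 2 * (a j * sg e j)))) := by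
  have h1 : ∀ e, RW a e * f (RW a e) = ∑ j, a j * sg e j * f (RW a e) := by
    intro e
    rw [← Finset.sum_mul]; rfl
  simp_rw [h1]
  rw [Finset.expect_sum_comm]
  refine Finset.sum_congr rfl fun j _ => ?_
  have h2 := expect_fl j (fun e => a j * sg e j * f (RW a e))
  simp_rw [RW_fl, sg_fl_self] at h2
  have h3 : 𝔼 e, (1/2) * (a j * sg e j * (f (RW a e) - f (RW a e - 2 * (a j * sg e j)))) =
    (1/2) * (𝔼 e, a j * sg e j * f (RW a e) + 𝔼 e, a j * -sg e j * f (RW a e - 2 * (a j * sg e j))) := by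
    rw [← Finset.expect_add_distrib, Finset.mul_expect]
    refine Finset.expect_congr rfl fun e _ => ?_
    ring
  rw [h3, h2]
  ring

lemma expect_W2 {n : ℕ} (a : Fin n → ℝ) (ha : ∑ i, a i ^ 2 = 1) : 𝔼 e, RW a e * RW a e = 1 := by
  have := expect_W a id
  simp only [id] at this
  rw [this]
  refine Eq.trans (Finset.sum_congr rfl fun j _ => ?_) ha
  have : ∀ e : Fin n → Bool, (1/2 : ℝ) * (a j * sg e j * (RW a e - (RW a e - 2 * (a j * sg e j)))) = a j ^ 2 := by
    intro e
    have := sg_sq e j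
    linear_combination a j ^ 2 * this
  simp_rw [this]
  simp

lemma expect_absW {n : ℕ} (a : Fin n → ℝ) (ha : ∑ i, a i ^ 2 = 1) : 𝔼 e, |RW a e| ≤ 1 := by
  have h : 𝔼 e, |RW a e| ≤ 𝔼 e, (1/2) * (1 + RW a e * RW a e) := by
    refine Finset.expect_le_expect fun e _ => ?_
    nlinarith [sq_nonneg (|RW a e| - 1), abs_mul_abs_self (RW a e)]
  rw [← Finset.mul_expect, Finset.expect_add_distrib, expect_W2 a ha] at h
  simp at h
  linarith

/-- ramp -/
def rp (c L w : ℝ) : ℝ := max (-L) (min L (w - c))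

lemma rp_abs {c L w : ℝ} (hL : 0 ≤ L) : |rp c L w| ≤ L := by
  unfold rp
  rw [abs_le]
  exact ⟨le_max_left _ _, max_le (by linarith) (min_le_left _ _)⟩

lemma rp_mono {c L w w' : ℝ} (h : w ≤ w') : rp c L w ≤ rp c L w' := by
  unfold rp
  gcongr

lemma rp_step {t r γ W d : ℝ} (hγ : 0 ≤ γ) (hr : 0 ≤ r) :
    (if |W - t| ≤ r then 1 else 0) * (|d| * min (2 * |d|) γ) ≤
      d * (rp t (r + γ) W - rp t (r + γ) (W - 2 * d)) := by
  have key : ∀ x y m: ℝ, |x - t| ≤ r ∨ |y - t| ≤ r → 0 ≤ m → y = x + 2 * m →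
      min (2 * m) γ ≤ rp t (r + γ) y - rp t (r + γ) x := by
    intro x y m h hm hy
    subst hy
    unfold rp
    simp only [abs_le] at h
    rcases h with h | h
    · rcases le_total (2 * m) γ with h1 | h1
      · rw [min_eq_left h1, min_eq_right (by linarith), min_eq_right (by linarith), max_eq_right (by linarith), max_eq_right (by linarith)]
        linarith
      · rw [min_eq_right h1, min_eq_right (a := r + γ) (b := x - t) (by linarith), max_eq_right (a := -(r + γ)) (b := x - t) (by linarith)]
        have : x - t + γ ≤ min (r + γ) (x + 2 * m - t) := le_min (by linarith) (by linarith)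
        linarith [le_max_right (-(r + γ)) (min (r + γ) (x + 2 * m - t))]
    · rcases le_total (2 * m) γ with h1 | h1
      · rw [min_eq_left h1, min_eq_right (by linarith), min_eq_right (by linarith), max_eq_right (by linarith), max_eq_right (by linarith)]
        linarith
      · rw [min_eq_right h1, min_eq_right (a := r + γ) (b := x + 2 * m - t) (by linarith), max_eq_right (a := -(r + γ)) (b := x + 2 * m - t) (by linarith)]
        have : max (-(r + γ)) (min (r + γ) (x - t)) ≤ x + 2 * m - t - γ :=
          max_le (by linarith) ((min_le_right _ _).trans (by linarith))
        linarith
  split_ifs with h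
  · rw [one_mul]
    rcases le_total 0 d with hd | hd
    · rw [abs_of_nonneg hd]
      exact mul_le_mul_of_nonneg_left (key (W - 2 * d) W d (Or.inr h) hd (by ring)) hd
    · rw [abs_of_nonpos hd]
      have := mul_le_mul_of_nonneg_left (key W (W - 2 * d) (-d) (Or.inl h) (by linarith) (by ring)) (neg_nonneg.mpr hd)
      linarith
  · rw [zero_mul]
    rcases le_total 0 d with hd | hd
    · exact mul_nonneg hd (sub_nonneg.mpr (rp_mono (by linarith)))
    · exact mul_nonneg_of_nonpos_of_nonpos hd (sub_nonpos.mpr (rp_mono (by linarith)))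

lemma conc {n : ℕ} (a : Fin n → ℝ) (ha : ∑ i, a i ^ 2 = 1) (t r : ℝ) (hr : 0 ≤ r) :
    𝔼 e, (if |RW a e - t| ≤ r then (1:ℝ) else 0) ≤ 2 * (r + ∑ i, |a i| ^ 3) := by
  set γ := ∑ i, |a i| ^ 3 with hγ
  have hγ0 : 0 < γ := by
    by_contra hc
    have h0 : γ = 0 := le_antisymm (not_lt.mp hc) (Finset.sum_nonneg fun i _ => by positivity)
    have : ∀ i, a i = 0 := by
      intro i
      have := (Finset.sum_eq_zero_iff_of_nonneg (fun i _ => by positivity)).mp (hγ.symm.trans h0) i (Finset.mem_univ i)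
      simpa using this
    simp [this] at ha
  set P := 𝔼 e, (if |RW a e - t| ≤ r then (1:ℝ) else 0) with hP
  have hP0 : 0 ≤ P := Finset.expect_nonneg fun e _ => by split_ifs <;> norm_num
  have h1 : 𝔼 e, RW a e * rp t (r + γ) (RW a e) ≤ r + γ := by
    calc _ ≤ 𝔼 e, (r + γ) * |RW a e| := by
          refine Finset.expect_le_expect fun e _ => ?_
          refine (le_abs_self _).trans ?_
          rw [abs_mul, mul_comm]
          exact mul_le_mul_of_nonneg_right (rp_abs (by linarith)) (abs_nonneg _)
      _ = (r + γ) * 𝔼 e, |RW a e| := by rw [Finset.mul_expect]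
      _ ≤ (r + γ) * 1 := mul_le_mul_of_nonneg_left (expect_absW a ha) (by linarith)
      _ = _ := mul_one _
  rw [expect_W] at h1
  have h2 : ∑ j, P * (a j ^ 2 - |a j| ^ 3 / (2 * γ)) ≤
      ∑ j, 𝔼 e, (1/2) * (a j * sg e j * (rp t (r + γ) (RW a e) - rp t (r + γ) (RW a e - 2 * (a j * sg e j)))) := by
    refine Finset.sum_le_sum fun j _ => ?_
    calc P * (a j ^ 2 - |a j| ^ 3 / (2 * γ)) ≤ P * ((1/2) * (|a j| * min (2 * |a j|) γ)) := by
          refine mul_le_mul_of_nonneg_left ?_ hP0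
          have hx := abs_nonneg (a j)
          rw [← sq_abs (a j)]
          set x := |a j|
          have h3 : 0 ≤ x ^ 3 / (2 * γ) := by positivity
          rcases le_total (2 * x) γ with h | h
          · rw [min_eq_left h]; nlinarith
          · rw [min_eq_right h]
            have : x * (x - x ^ 2 / (2 * γ)) ≤ x * (γ / 2) := by
              refine mul_le_mul_of_nonneg_left ?_ hx
              rw [sub_le_iff_le_add]
              have : γ / 2 + x ^ 2 / (2 * γ) - x = (γ - x) ^ 2 / (2 * γ) := by field_simp; ring
              have h5 : 0 ≤ (γ - x) ^ 2 / (2 * γ) := by positivity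
              linarith
            have e : x ^ 3 / (2 * γ) = x * (x ^ 2 / (2 * γ)) := by ring
            rw [e]
            linarith
      _ = 𝔼 e, (if |RW a e - t| ≤ r then (1:ℝ) else 0) * ((1/2) * (|a j| * min (2 * |a j|) γ)) := by
          rw [hP, Finset.expect_mul]
      _ ≤ _ := by
          refine Finset.expect_le_expect fun e _ => ?_
          have := rp_step (t := t) (W := RW a e) (d := a j * sg e j) hγ0.le hr
          rw [abs_mul, sg_abs, mul_one] at this
          linarith
  have h3 : ∑ j, P * (a j ^ 2 - |a j| ^ 3 / (2 * γ)) = P * (1/2) := by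
    rw [← Finset.mul_sum, Finset.sum_sub_distrib, ha, ← Finset.sum_div, ← hγ]
    congr 1
    field_simp
    norm_num
  rw [h3] at h2
  linarith

lemma be_unit {n : ℕ} (a : Fin n → ℝ) (ha : ∑ i, a i ^ 2 = 1) (t : ℝ) :
    |𝔼 e, (if t ≤ RW a e then (1:ℝ) else 0) - Q t| ≤ 120 * ∑ i, |a i| ^ 3 := by
  set γ := ∑ i, |a i| ^ 3 with hγ
  have e1 : 𝔼 e, (if t ≤ RW a e then (1:ℝ) else 0) - Q t =
      𝔼 e, RW a e * sf t (RW a e) - 𝔼 e, sgf t (RW a e) := by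
    have : ∀ e, (if t ≤ RW a e then (1:ℝ) else 0) = RW a e * sf t (RW a e) - sgf t (RW a e) + Q t := by
      intro e
      unfold sgf
      by_cases h : t ≤ RW a e
      · rw [if_pos h, if_neg (not_lt.mpr h)]; ring
      · rw [if_neg h, if_pos (not_le.mp h)]; ring
    simp_rw [this]
    rw [Finset.expect_add_distrib, Finset.expect_sub_distrib]
    simp
  have e2 : 𝔼 e, sgf t (RW a e) = ∑ j, 𝔼 e, (1/2) * (a j * sg e j * (2 * (a j * sg e j) * sgf t (RW a e))) := by
    rw [← Finset.expect_sum_comm]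
    refine Finset.expect_congr rfl fun e _ => ?_
    have : ∀ j, (1/2) * (a j * sg e j * (2 * (a j * sg e j) * sgf t (RW a e))) = a j ^ 2 * sgf t (RW a e) := by
      intro j
      have := sg_sq e j
      linear_combination (a j ^ 2 * sgf t (RW a e)) * this
    simp_rw [this]
    rw [← Finset.sum_mul, ha, one_mul]
  rw [e1, e2, expect_W, ← Finset.sum_sub_distrib]
  refine (Finset.abs_sum_le_sum_abs _ _).trans ?_
  have e3 : ∀ j, |𝔼 e, (1/2) * (a j * sg e j * (sf t (RW a e) - sf t (RW a e - 2 * (a j * sg e j)))) -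
      𝔼 e, (1/2) * (a j * sg e j * (2 * (a j * sg e j) * sgf t (RW a e)))| ≤
      a j ^ 2 * (72 * |a j| + 24 * γ) := by
    intro j
    rw [← Finset.expect_sub_distrib]
    refine (Finset.abs_expect_le _ _).trans ?_
    calc _ ≤ 𝔼 e, (a j ^ 2 * (12 * |a j| * (1 + |RW a e|)) +
          a j ^ 2 * 12 * (if |RW a e - t| ≤ 2 * |a j| then (1:ℝ) else 0)) := by
          refine Finset.expect_le_expect fun e _ => ?_
          have hk := sf_key t (RW a e) (2 * (a j * sg e j))
          have ed : |2 * (a j * sg e j)| = 2 * |a j| := by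
            rw [abs_mul, abs_mul, sg_abs]; norm_num
          rw [ed] at hk
          rw [← mul_sub, ← mul_sub, abs_mul, abs_mul, abs_mul, sg_abs, mul_one]
          have h2 : |(1/2 : ℝ)| = 1/2 := by norm_num
          rw [h2]
          have := mul_le_mul_of_nonneg_left hk (abs_nonneg (a j))
          have e4 : |a j| * |a j| = a j ^ 2 := by rw [← sq, sq_abs]
          calc _ ≤ (1/2) * (|a j| * (2 * |a j| * (6 * (2 * |a j|) * (1 + |RW a e|) + 12 * if |RW a e - t| ≤ 2 * |a j| then 1 else 0))) := by
                gcongr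
            _ = (|a j| * |a j|) * (12 * |a j| * (1 + |RW a e|)) + (|a j| * |a j|) * 12 * (if |RW a e - t| ≤ 2 * |a j| then (1:ℝ) else 0) := by ring
            _ = _ := by rw [e4]
      _ = a j ^ 2 * (12 * |a j|) * (1 + 𝔼 e, |RW a e|) + a j ^ 2 * 12 * 𝔼 e, (if |RW a e - t| ≤ 2 * |a j| then (1:ℝ) else 0) := by
          rw [Finset.expect_add_distrib, ← Finset.mul_expect, ← Finset.mul_expect, ← Finset.mul_expect, Finset.expect_add_distrib]
          simp
          ring
      _ ≤ a j ^ 2 * (12 * |a j|) * (1 + 1) + a j ^ 2 * 12 * (2 * (2 * |a j| + γ)) := by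
          gcongr
          · exact expect_absW a ha
          · exact conc a ha t _ (by positivity)
      _ = _ := by ring
  refine (Finset.sum_le_sum fun j _ => e3 j).trans ?_
  have e5 : ∀ j, a j ^ 2 * (72 * |a j| + 24 * γ) = 72 * |a j| ^ 3 + 24 * γ * a j ^ 2 := by
    intro j
    rw [← sq_abs (a j)]; ring
  simp_rw [e5]
  rw [Finset.sum_add_distrib, ← Finset.mul_sum, ← Finset.mul_sum, ha, ← hγ]
  have : 0 ≤ γ := Finset.sum_nonneg fun i _ => by positivity
  linarith

lemma be_gen {n : ℕ} (a : Fin n → ℝ) (σ : ℝ) (hσ : 0 < σ) (ha : ∑ i, a i ^ 2 = σ ^ 2) (t : ℝ) :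
    |𝔼 e, (if t ≤ RW a e then (1:ℝ) else 0) - Q (t / σ)| ≤ 120 * (∑ i, |a i| ^ 3) / σ ^ 3 := by
  have h := be_unit (fun i => a i / σ) (by
    simp_rw [div_pow]
    rw [← Finset.sum_div, ha, div_self (by positivity)]) (t / σ)
  have e : ∀ e, RW (fun i => a i / σ) e = RW a e / σ := by
    intro e
    unfold RW
    rw [Finset.sum_div]
    exact Finset.sum_congr rfl fun i _ => by ring
  simp_rw [e, div_le_div_iff_of_pos_right hσ, abs_div, div_pow] at h
  rw [← Finset.sum_div, abs_of_pos hσ, ← mul_div_assoc] at h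
  exact h

end CLTU

namespace CLTU
open Set

lemma ph_bd (z : ℝ) : ph z * (1 + z ^ 2 / 2 + z ^ 4 / 8) ≤ 1 := by
  have h1 : (√(2 * π))⁻¹ ≤ 1 := by
    apply inv_le_one_of_one_le₀
    rw [Real.one_le_sqrt]
    nlinarith [Real.pi_gt_three]
  have h2 : 1 + z ^ 2 / 2 + z ^ 4 / 8 ≤ Real.exp (z ^ 2 / 2) := by
    have := Real.quadratic_le_exp_of_nonneg (x := z ^ 2 / 2) (by positivity)
    nlinarith
  unfold ph
  calc _ ≤ (1 * Real.exp (-(z ^ 2 / 2))) * Real.exp (z ^ 2 / 2) := by gcongr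
    _ = 1 := by rw [one_mul, ← Real.exp_add]; simp

lemma zph_bd (z : ℝ) : |z * ph z| ≤ 1 := by
  rw [abs_mul, abs_of_pos (ph_pos z)]
  have := ph_bd z
  have hp := ph_pos z
  have h1 : |z| ≤ 1 + z ^ 2 / 2 + z ^ 4 / 8 := by
    have : 0 ≤ z ^ 4 := by positivity
    nlinarith [sq_nonneg (|z| - 1), sq_abs z]
  nlinarith

lemma z3ph_bd (z : ℝ) : |z ^ 3 * ph z| ≤ 4 := by
  rw [abs_mul, abs_of_pos (ph_pos z), abs_pow]
  have := ph_bd z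
  have hp := ph_pos z
  have h1 : |z| ^ 3 ≤ 4 * (1 + z ^ 2 / 2 + z ^ 4 / 8) := by
    have e : z ^ 4 = |z| ^ 4 := by rw [← abs_pow, abs_of_nonneg (by positivity)]
    rw [e, ← sq_abs z]
    nlinarith [sq_nonneg (|z| ^ 2 - |z|), sq_nonneg (|z|)]
  nlinarith

lemma z_deriv (t : ℝ) {s : ℝ} (hs : 0 < s) :
    HasDerivAt (fun s => t / √s) (-(t / √s) / (2 * s)) s := by
  have h0 : √s ≠ 0 := (Real.sqrt_pos.mpr hs).ne'
  refine ((hasDerivAt_const s t).div (Real.hasDerivAt_sqrt hs.ne') h0).congr_deriv ?_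
  have h1 := Real.sq_sqrt hs.le
  rw [h1]
  field_simp
  ring

noncomputable def G1 (t s : ℝ) : ℝ := (t / √s * ph (t / √s)) / (2 * s)

lemma G_deriv (t : ℝ) {s : ℝ} (hs : 0 < s) :
    HasDerivAt (fun s => Q (t / √s)) (G1 t s) s := by
  refine ((Q_deriv (t / √s)).comp s (z_deriv t hs)).congr_deriv ?_
  unfold G1
  ring

lemma m_deriv (z : ℝ) : HasDerivAt (fun z => z * ph z) ((1 - z ^ 2) * ph z) z := by
  refine ((hasDerivAt_id z).mul (ph_deriv z)).congr_deriv ?_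
  simp
  ring

lemma G1_deriv (t : ℝ) {s : ℝ} (hs : 0 < s) :
    HasDerivAt (G1 t) (-(1/2) * (t / √s * ph (t / √s)) / s ^ 2
      - (1/4) * (t / √s * ph (t / √s) - (t / √s) ^ 3 * ph (t / √s)) / s ^ 2) s := by
  have h1 := (m_deriv (t / √s)).comp s (z_deriv t hs)
  have h2 := h1.div ((hasDerivAt_id s).const_mul 2) (by simp [hs.ne'])
  refine HasDerivAt.congr_deriv (f := G1 t) h2 ?_
  simp only [Function.comp, id]
  generalize t / √s = z
  field_simp
  ring

lemma mix (t s : ℝ) (hs : 0 ≤ s) : |Q (t / √s) - Q t - (t * ph t / 2) * (s - 1)| ≤ 7 * (s - 1) ^ 2 := by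
  by_cases h : s ∈ Icc (1/2 : ℝ) 2
  · have hd2 : ∀ x ∈ Icc (1/2:ℝ) 2, ‖(-(1/2) * (t / √x * ph (t / √x)) / x ^ 2
      - (1/4) * (t / √x * ph (t / √x) - (t / √x) ^ 3 * ph (t / √x)) / x ^ 2)‖ ≤ 7 := by
      intro x hx
      have b1 := zph_bd (t / √x)
      have b2 := z3ph_bd (t / √x)
      generalize t / √x = z at b1 b2
      have hx2 : (x ^ 2)⁻¹ ≤ 4 := by
        rw [inv_le_comm₀ (by have := hx.1; positivity) (by norm_num)]
        nlinarith [hx.1]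
      have hx0 : 0 ≤ (x ^ 2)⁻¹ := by positivity
      have e : (-(1/2) * (z * ph z) / x ^ 2 - (1/4) * (z * ph z - z ^ 3 * ph z) / x ^ 2) =
        (-(3/4) * (z * ph z) + (1/4) * (z ^ 3 * ph z)) * (x ^ 2)⁻¹ := by ring
      rw [e, Real.norm_eq_abs, abs_mul, abs_of_nonneg hx0]
      have b3 : |-(3/4) * (z * ph z) + (1/4) * (z ^ 3 * ph z)| ≤ 7/4 := by
        rw [abs_le] at *
        constructor <;> linarith [b1.1, b1.2, b2.1, b2.2]
      calc _ ≤ (7/4 : ℝ) * 4 := mul_le_mul b3 hx2 hx0 (by norm_num)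
        _ = 7 := by norm_num
    have h1m : (1:ℝ) ∈ Icc (1/2:ℝ) 2 := by constructor <;> norm_num
    have hG1 : ∀ x ∈ Icc (1/2:ℝ) 2, ‖G1 t x - G1 t 1‖ ≤ 7 * ‖x - 1‖ := by
      intro x hx
      refine (convex_Icc (1/2:ℝ) 2).norm_image_sub_le_of_norm_hasDerivWithin_le
        (f' := fun x => (-(1/2) * (t / √x * ph (t / √x)) / x ^ 2
      - (1/4) * (t / √x * ph (t / √x) - (t / √x) ^ 3 * ph (t / √x)) / x ^ 2))
        (fun y hy => (G1_deriv t (by linarith [hy.1])).hasDerivWithinAt) hd2 h1m hx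
    have hsub : uIcc 1 s ⊆ Icc (1/2:ℝ) 2 := by
      apply uIcc_subset_Icc h1m h
    have hG := (convex_uIcc (1:ℝ) s).norm_image_sub_le_of_norm_hasDerivWithin_le
      (f := fun x => Q (t / √x) - x * G1 t 1) (f' := fun x => G1 t x - G1 t 1) (C := 7 * |s - 1|)
      (fun y hy => by
        have hy' := hsub hy
        have := (G_deriv t (s := y) (by linarith [hy'.1])).sub ((hasDerivAt_id y).mul_const (G1 t 1))
        exact (this.congr_deriv (by simp)).hasDerivWithinAt)
      (fun y hy => by
        refine (hG1 y (hsub hy)).trans ?_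
        rw [Real.norm_eq_abs]
        have := abs_sub_left_of_mem_uIcc hy
        gcongr)
      left_mem_uIcc right_mem_uIcc
    rw [Real.norm_eq_abs, Real.norm_eq_abs, mul_assoc, ← sq, sq_abs] at hG
    convert hG using 2
    simp [G1]
    ring
  · have h1 : 1/2 ≤ |s - 1| := by
      by_contra hc
      apply h
      rw [not_le, abs_lt] at hc
      constructor <;> linarith [hc.1, hc.2]
    have h2 := zph_bd t
    have a : |Q (t / √s) - Q t| ≤ 1 := by
      rw [abs_le]
      constructor <;> linarith [Q_le_one t, Q_nonneg t, Q_le_one (t / √s), Q_nonneg (t / √s)]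
    have b : |(t * ph t / 2) * (s - 1)| ≤ (1/2) * |s - 1| := by
      rw [abs_mul, abs_div, abs_two]
      exact mul_le_mul_of_nonneg_right (by linarith) (abs_nonneg _)
    have c := abs_sub (Q (t / √s) - Q t) ((t * ph t / 2) * (s - 1))
    rw [← sq_abs (s - 1)]
    nlinarith

end CLTU

namespace CLTU
open Set

structure Good (κ : ℝ) {n : ℕ} (μ : Measure (Fin n → ℝ)) (u : (Fin n → ℝ) → ℝ) : Prop where
  hκ : 1 < κ
  prob : IsProbabilityMeasure μ
  dens : μ = (volume : Measure (Fin n → ℝ)).withDensity (fun x => ENNReal.ofReal (Real.exp (-u x)))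
  sym : ∀ e : Fin n → Bool, Measure.map (fun x => fun i => sg e i * x i) μ = μ
  conv : ConvexOn ℝ {x : Fin n → ℝ | ∀ i, 0 ≤ x i} (fun x => u (fun i => x i ^ κ))

/-- open orthant -/
def OO (n : ℕ) : Set (Fin n → ℝ) := univ.pi fun _ => Ioi 0

lemma OO_meas (n : ℕ) : MeasurableSet (OO n) := MeasurableSet.univ_pi fun _ => measurableSet_Ioi

lemma OO_open (n : ℕ) : IsOpen (OO n) := isOpen_set_pi finite_univ fun _ _ => isOpen_Ioi

lemma om_eq (n : ℕ) : (volume : Measure (Fin n → ℝ)).restrict (OO n) = om n := by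
  unfold OO om
  rw [volume_pi, Measure.restrict_pi_pi]

lemma flip_meas {n : ℕ} (e : Fin n → Bool) : Measurable fun (x : Fin n → ℝ) => fun i => sg e i * x i := by
  fun_prop

noncomputable def dn {n : ℕ} (u : (Fin n → ℝ) → ℝ) : (Fin n → ℝ) → ENNReal :=
  (OO n).indicator fun x => ENNReal.ofReal (Real.exp (-u x))

lemma Good.u_cont {κ : ℝ} {n : ℕ} {μ : Measure (Fin n → ℝ)} {u : (Fin n → ℝ) → ℝ} (h : Good κ μ u) :
    ContinuousOn u (OO n) := by
  have hκ := h.hκ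
  have h1 := h.conv.continuousOn_interior
  have h2 : OO n ⊆ interior {x : Fin n → ℝ | ∀ i, 0 ≤ x i} := by
    refine interior_maximal ?_ (OO_open n)
    intro x hx i
    exact le_of_lt (hx i (mem_univ i))
  have h3 := h1.mono h2
  have h4 : ContinuousOn (fun (x : Fin n → ℝ) => fun i => x i ^ (1/κ)) (OO n) := by
    refine continuousOn_pi.mpr fun i => ?_
    refine ContinuousOn.rpow_const (continuous_apply i).continuousOn ?_
    intro x hx
    exact Or.inl (ne_of_gt (hx i (mem_univ i)))
  have h5 := h3.comp h4 (by
    intro x hx i _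
    exact Real.rpow_pos_of_pos (hx i (mem_univ i)) _)
  refine h5.congr ?_
  intro x hx
  simp only [Function.comp]
  congr 1
  funext i
  rw [← Real.rpow_mul (le_of_lt (hx i (mem_univ i))), one_div_mul_cancel (by linarith), Real.rpow_one]

lemma Good.dn_meas {κ : ℝ} {n : ℕ} {μ : Measure (Fin n → ℝ)} {u : (Fin n → ℝ) → ℝ} (h : Good κ μ u) :
    Measurable (dn u) := by
  have hc : ContinuousOn (fun x => ENNReal.ofReal (Real.exp (-u x))) (OO n) := by
    refine ENNReal.continuous_ofReal.comp_continuousOn ?_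
    exact Real.continuous_exp.comp_continuousOn h.u_cont.neg
  classical
  have := ContinuousOn.measurable_piecewise (s := OO n) (g := fun _ => (0:ENNReal)) hc
    continuousOn_const (OO_meas n)
  change Measurable ((OO n).piecewise _ 0) at this
  rwa [Set.piecewise_eq_indicator] at this

lemma Good.ne_zero {κ : ℝ} {n : ℕ} {μ : Measure (Fin n → ℝ)} {u : (Fin n → ℝ) → ℝ} (h : Good κ μ u) :
    ∀ᵐ x ∂μ, ∀ i, x i ≠ 0 := by
  rw [h.dens]
  refine (withDensity_absolutelyContinuous _ _).ae_le ?_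
  show ∀ᵐ x ∂(volume : Measure (Fin n → ℝ)), ∀ i, x i ≠ 0
  rw [ae_all_iff]
  intro i
  have := Measure.pi_hyperplane (fun _ : Fin n => (volume : Measure ℝ)) i 0
  rw [ae_iff]
  simpa [volume_pi] using this

lemma Good.orth {κ : ℝ} {n : ℕ} {μ : Measure (Fin n → ℝ)} {u : (Fin n → ℝ) → ℝ} (h : Good κ μ u)
    {φ : (Fin n → ℝ) → ENNReal} (hφ : Measurable φ)
    (hev : ∀ e : Fin n → Bool, ∀ x, φ (fun i => sg e i * x i) = φ x) :
    ∫⁻ x, φ x ∂μ = 2 ^ n * ∫⁻ x, φ x * dn u x ∂(om n) := by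
  have h1 : ∀ᵐ x ∂μ, φ x = ∑ e : Fin n → Bool, (OO n).indicator φ (fun i => sg e i * x i) := by
    filter_upwards [h.ne_zero] with x hx
    rw [Finset.sum_eq_single (fun i => decide (0 < x i))]
    · rw [indicator_of_mem, hev]
      intro i _
      by_cases hi : 0 < x i
      · simp [sg, hi]
      · have : x i < 0 := lt_of_le_of_ne (not_lt.mp hi) (hx i)
        simp [sg, hi, this]
    · intro e _ he
      refine indicator_of_notMem ?_ _
      intro hm
      apply he
      funext i
      have := hm i (mem_univ i)
      unfold sg at this
      cases hc : e i
      · simp only [hc] at this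
        have : x i < 0 := by simpa using this
        simp [this.le]
      · simp only [hc] at this
        have : 0 < x i := by simpa using this
        simp [this]
    · simp
  rw [lintegral_congr_ae h1, lintegral_finsetSum]
  · have h2 : ∀ e : Fin n → Bool, ∫⁻ x, (OO n).indicator φ (fun i => sg e i * x i) ∂μ =
        ∫⁻ x, φ x * dn u x ∂(om n) := by
      intro e
      rw [← lintegral_map (f := (OO n).indicator φ) (hφ.indicator (OO_meas n)) (flip_meas e), h.sym e,
        lintegral_indicator (OO_meas n), h.dens, restrict_withDensity (OO_meas n), om_eq]
      have hae : (fun x => ENNReal.ofReal (Real.exp (-u x))) =ᵐ[om n] dn u := by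
        rw [← om_eq]
        filter_upwards [ae_restrict_mem (OO_meas n)] with x hx
        simp [dn, hx]
      rw [withDensity_congr_ae hae, lintegral_withDensity_eq_lintegral_mul _ h.dn_meas hφ]
      simp only [Pi.mul_apply, mul_comm]
    simp_rw [h2]
    simp
  · intro e _
    exact (hφ.indicator (OO_meas n)).comp (flip_meas e)

lemma Good.plmu {κ : ℝ} {n : ℕ} {μ : Measure (Fin n → ℝ)} {u : (Fin n → ℝ) → ℝ} (h : Good κ μ u)
    {φ ψ χ : (Fin n → ℝ) → ENNReal} (hφ : Measurable φ) (hψ : Measurable ψ) (hχ : Measurable χ)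
    (evφ : ∀ e : Fin n → Bool, ∀ x, φ (fun i => sg e i * x i) = φ x)
    (evψ : ∀ e : Fin n → Bool, ∀ x, ψ (fun i => sg e i * x i) = ψ x)
    (evχ : ∀ e : Fin n → Bool, ∀ x, χ (fun i => sg e i * x i) = χ x)
    (H : ∀ a b : Fin n → ℝ, (∀ i, 0 < a i) → (∀ i, 0 < b i) →
      φ (fun i => a i ^ κ) * ψ (fun i => b i ^ κ) ≤
      ((∏ i, ENNReal.ofReal (wt κ (a i) (b i))) * χ (fun i => ((a i + b i) / 2) ^ κ)) ^ 2) :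
    (∫⁻ x, φ x ∂μ) * ∫⁻ x, ψ x ∂μ ≤ (∫⁻ x, χ x ∂μ) ^ 2 := by
  rw [h.orth hφ evφ, h.orth hψ evψ, h.orth hχ evχ]
  have hd := h.dn_meas
  have := pl_n h.hκ n (hφ.mul hd) (hψ.mul hd) (hχ.mul hd) (by
    intro a b ha hb
    have mem : ∀ c : Fin n → ℝ, (∀ i, 0 < c i) → (fun i => c i ^ κ) ∈ OO n :=
      fun c hc i _ => Real.rpow_pos_of_pos (hc i) _
    have hm : ∀ i, 0 < (a i + b i) / 2 := fun i => by linarith [ha i, hb i]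
    simp only [Pi.mul_apply]
    have d1 : dn u (fun i => a i ^ κ) = ENNReal.ofReal (Real.exp (-u fun i => a i ^ κ)) := by
      unfold dn; rw [indicator_of_mem (mem a ha)]
    have d2 : dn u (fun i => b i ^ κ) = ENNReal.ofReal (Real.exp (-u fun i => b i ^ κ)) := by
      unfold dn; rw [indicator_of_mem (mem b hb)]
    have d3 : dn u (fun i => ((a i + b i) / 2) ^ κ) =
        ENNReal.ofReal (Real.exp (-u fun i => ((a i + b i) / 2) ^ κ)) := by
      unfold dn; rw [indicator_of_mem (mem (fun i => (a i + b i) / 2) hm)]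
    have hc := (h.conv.2) (show a ∈ {x : Fin n → ℝ | ∀ i, 0 ≤ x i} from fun i => (ha i).le)
      (show b ∈ {x : Fin n → ℝ | ∀ i, 0 ≤ x i} from fun i => (hb i).le)
      (show (0:ℝ) ≤ 1/2 by norm_num) (show (0:ℝ) ≤ 1/2 by norm_num) (by norm_num)
    have ec : (fun i => ((1/2 : ℝ) • a + (1/2 : ℝ) • b) i ^ κ) = fun i => ((a i + b i) / 2) ^ κ := by
      funext i
      simp only [Pi.add_apply, Pi.smul_apply, smul_eq_mul]
      congr 1
      ring
    simp only at hc
    rw [ec] at hc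
    have hdd : dn u (fun i => a i ^ κ) * dn u (fun i => b i ^ κ) ≤ dn u (fun i => ((a i + b i) / 2) ^ κ) ^ 2 := by
      rw [d1, d2, d3, ← ENNReal.ofReal_mul (Real.exp_nonneg _), ← ENNReal.ofReal_pow (Real.exp_nonneg _),
        ← Real.exp_add, ← Real.exp_nat_mul]
      apply ENNReal.ofReal_le_ofReal
      apply Real.exp_le_exp.mpr
      simp only [smul_eq_mul] at hc
      push_cast
      linarith
    calc _ = (φ (fun i => a i ^ κ) * ψ (fun i => b i ^ κ)) * (dn u (fun i => a i ^ κ) * dn u (fun i => b i ^ κ)) := by ring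
      _ ≤ _ := mul_le_mul' (H a b ha hb) hdd
      _ = _ := by ring)
  simp only [Pi.mul_apply] at this
  calc _ = (2 ^ n) ^ 2 * ((∫⁻ x, φ x * dn u x ∂(om n)) * ∫⁻ x, ψ x * dn u x ∂(om n)) := by ring
    _ ≤ (2 ^ n) ^ 2 * (∫⁻ x, χ x * dn u x ∂(om n)) ^ 2 := by gcongr
    _ = _ := by ring

end CLTU

namespace CLTU
open Set

lemma wt_ge_one {κ a b : ℝ} (hκ : 1 < κ) (ha : 0 < a) (hb : 0 < b) : 1 ≤ wt κ a b := by
  unfold wt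
  refine Real.one_le_rpow ?_ (by linarith)
  rw [le_div_iff₀ (by positivity)]
  nlinarith [sq_nonneg (a - b)]

lemma tail_sq {κ : ℝ} {n : ℕ} {μ : Measure (Fin n → ℝ)} {u : (Fin n → ℝ) → ℝ} (h : Good κ μ u)
    (i : Fin n) (s : ℝ) : μ {x | 2 ^ κ * s ≤ |x i|} ≤ μ {x | s ≤ |x i|} ^ 2 := by
  have hm : ∀ s : ℝ, MeasurableSet {x : Fin n → ℝ | s ≤ |x i|} := by
    intro s
    exact measurableSet_le measurable_const (by fun_prop)
  have hev : ∀ s : ℝ, ∀ e : Fin n → Bool, ∀ x, ({x : Fin n → ℝ | s ≤ |x i|}.indicator (fun _ => (1:ENNReal)))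
      (fun i => sg e i * x i) = {x : Fin n → ℝ | s ≤ |x i|}.indicator (fun _ => (1:ENNReal)) x := by
    intro s e x
    have : (fun i => sg e i * x i) ∈ {x : Fin n → ℝ | s ≤ |x i|} ↔ x ∈ {x : Fin n → ℝ | s ≤ |x i|} := by
      simp [abs_mul, sg_abs]
    by_cases hx : x ∈ {x : Fin n → ℝ | s ≤ |x i|}
    · rw [indicator_of_mem hx, indicator_of_mem (this.mpr hx)]
    · rw [indicator_of_notMem hx, indicator_of_notMem (fun hh => hx (this.mp hh))]
  have := h.prob
  have key := h.plmu (φ := {x : Fin n → ℝ | 2 ^ κ * s ≤ |x i|}.indicator (fun _ => (1:ENNReal)))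
    (ψ := fun _ => 1) (χ := {x : Fin n → ℝ | s ≤ |x i|}.indicator (fun _ => (1:ENNReal)))
    (measurable_const.indicator (hm _)) measurable_const (measurable_const.indicator (hm _))
    (hev _) (fun _ _ => rfl) (hev _) (by
      intro a b ha hb
      by_cases hx : (fun i => a i ^ κ) ∈ {x : Fin n → ℝ | 2 ^ κ * s ≤ |x i|}
      · have hx2 : (fun i => ((a i + b i) / 2) ^ κ) ∈ {x : Fin n → ℝ | s ≤ |x i|} := by
          have h1 : 2 ^ κ * s ≤ |a i ^ κ| := hx
          show s ≤ |((a i + b i) / 2) ^ κ|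
          have hκ := h.hκ
          have hai := ha i
          have hbi := hb i
          rw [abs_of_nonneg (by positivity)] at h1 ⊢
          have h2 : (a i / 2) ^ κ ≤ ((a i + b i) / 2) ^ κ :=
            Real.rpow_le_rpow (by positivity) (by linarith) (by linarith)
          rw [Real.div_rpow hai.le (by norm_num)] at h2
          refine le_trans ?_ h2
          rw [le_div_iff₀ (by positivity)]
          linarith
        rw [indicator_of_mem hx, indicator_of_mem hx2]
        have : 1 ≤ ∏ i, ENNReal.ofReal (wt κ (a i) (b i)) := by
          refine Finset.one_le_prod'' fun i => ?_
          rw [ENNReal.one_le_ofReal]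
          exact wt_ge_one h.hκ (ha i) (hb i)
        rw [mul_one, mul_one]
        exact one_le_pow₀ this
      · rw [indicator_of_notMem hx]
        simp)
  rw [lintegral_indicator (hm _), lintegral_indicator (hm _)] at key
  simpa using key

noncomputable def M4 (κ : ℝ) : ℝ := 2 * (2 * (2 ^ κ) ^ 2) ^ 4

lemma M4_pos (κ : ℝ) : 0 < M4 κ := by unfold M4; positivity

lemma mom4 {κ : ℝ} {n : ℕ} {μ : Measure (Fin n → ℝ)} {u : (Fin n → ℝ) → ℝ} (h : Good κ μ u)
    (i : Fin n) (h2 : ∫⁻ x, ENNReal.ofReal (x i ^ 2) ∂μ ≤ 1) :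
    ∫⁻ x, ENNReal.ofReal (x i ^ 4) ∂μ ≤ ENNReal.ofReal (M4 κ) := by
  have hκ := h.hκ
  have := h.prob
  set l : ℝ := 2 ^ κ with hl
  have hl1 : 1 < l := Real.one_lt_rpow (by norm_num) (by linarith)
  set s0 : ℝ := 2 * l ^ 2 with hs0
  have s0p : 0 < s0 := by positivity
  have s01 : 1 ≤ s0 := by nlinarith
  set p : ℝ := 1 / s0 ^ 2 with hp
  have p0 : 0 ≤ p := by positivity
  have p1 : p ≤ 1 := by
    rw [hp, div_le_one (by positivity)]
    nlinarith
  have hm : ∀ s : ℝ, MeasurableSet {x : Fin n → ℝ | s ≤ |x i|} := by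
    intro s
    exact measurableSet_le measurable_const (by fun_prop)
  have T0 : μ {x | s0 ≤ |x i|} ≤ ENNReal.ofReal p := by
    have h3 := mul_meas_ge_le_lintegral (μ := μ) (f := fun x : Fin n → ℝ => ENNReal.ofReal (x i ^ 2))
      (by fun_prop) (ENNReal.ofReal (s0 ^ 2))
    have e : {x : Fin n → ℝ | ENNReal.ofReal (s0 ^ 2) ≤ ENNReal.ofReal (x i ^ 2)} = {x | s0 ≤ |x i|} := by
      ext x
      simp only [mem_ofPred_eq]
      rw [ENNReal.ofReal_le_ofReal_iff (by positivity), sq_le_sq, abs_of_pos s0p]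
    rw [e] at h3
    have h4 := h3.trans h2
    rw [hp, one_div, ENNReal.ofReal_inv_of_pos (by positivity), ENNReal.le_inv_iff_mul_le, mul_comm]
    exact h4
  have Tk : ∀ k : ℕ, μ {x | l ^ k * s0 ≤ |x i|} ≤ ENNReal.ofReal (p ^ (k + 1)) := by
    intro k
    induction k with
    | zero => simpa using T0
    | succ k ih =>
      have h3 := tail_sq h i (l ^ k * s0)
      rw [← hl] at h3
      have e : l * (l ^ k * s0) = l ^ (k + 1) * s0 := by ring
      rw [e] at h3
      refine h3.trans ((pow_le_pow_left' ih 2).trans ?_)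
      rw [← ENNReal.ofReal_pow (by positivity)]
      apply ENNReal.ofReal_le_ofReal
      rw [← pow_mul]
      exact pow_le_pow_of_le_one p0 p1 (by omega)
  have pt : ∀ x : Fin n → ℝ, ENNReal.ofReal (x i ^ 4) ≤ ENNReal.ofReal (s0 ^ 4) +
      ∑' k : ℕ, ENNReal.ofReal ((l ^ (k + 1) * s0) ^ 4) * {x : Fin n → ℝ | l ^ k * s0 ≤ |x i|}.indicator (fun _ => (1:ENNReal)) x := by
    intro x
    have e4 : x i ^ 4 = |x i| ^ 4 := by
      rw [show (4:ℕ) = 2 * 2 by norm_num, pow_mul, pow_mul, sq_abs]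
    rw [e4]
    by_cases hx : |x i| ≤ s0
    · refine le_trans (ENNReal.ofReal_le_ofReal ?_) le_self_add
      gcongr
    · push Not at hx
      obtain ⟨k, hk1, hk2⟩ := exists_nat_pow_near (x := |x i| / s0) (y := l)
        (by rw [le_div_iff₀ s0p]; linarith) hl1
      rw [le_div_iff₀ s0p] at hk1
      rw [div_lt_iff₀ s0p] at hk2
      refine le_trans ?_ le_add_self
      refine le_trans ?_ (ENNReal.le_tsum k)
      rw [indicator_of_mem (show x ∈ {x : Fin n → ℝ | l ^ k * s0 ≤ |x i|} from hk1), mul_one]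
      apply ENNReal.ofReal_le_ofReal
      gcongr
  calc ∫⁻ x, ENNReal.ofReal (x i ^ 4) ∂μ ≤ ∫⁻ x, (ENNReal.ofReal (s0 ^ 4) +
      ∑' k : ℕ, ENNReal.ofReal ((l ^ (k + 1) * s0) ^ 4) * {x : Fin n → ℝ | l ^ k * s0 ≤ |x i|}.indicator (fun _ => (1:ENNReal)) x) ∂μ := lintegral_mono pt
    _ = ENNReal.ofReal (s0 ^ 4) + ∑' k : ℕ, ENNReal.ofReal ((l ^ (k + 1) * s0) ^ 4) * μ {x : Fin n → ℝ | l ^ k * s0 ≤ |x i|} := by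
        rw [lintegral_add_left measurable_const, lintegral_const, measure_univ, mul_one, lintegral_tsum]
        · congr 2
          funext k
          rw [lintegral_const_mul _ (measurable_const.indicator (hm _)), lintegral_indicator (hm _)]
          simp
        · intro k
          exact ((measurable_const.indicator (hm _)).const_mul _).aemeasurable
    _ ≤ ENNReal.ofReal (s0 ^ 4) + ∑' k : ℕ, ENNReal.ofReal (s0 ^ 4 / 4 * (1/4) ^ k) := by
        gcongr with k
        refine (mul_le_mul' le_rfl (Tk k)).trans ?_
        rw [← ENNReal.ofReal_mul (by positivity)]
        apply ENNReal.ofReal_le_ofReal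
        have : l ^ 4 * p = 1 / 4 := by
          rw [hp, hs0]; field_simp; norm_num
        have e : (l ^ (k + 1) * s0) ^ 4 * p ^ (k + 1) = s0 ^ 4 * (l ^ 4 * p) ^ (k + 1) := by ring
        rw [e, this]
        apply le_of_eq
        ring
    _ ≤ ENNReal.ofReal (M4 κ) := by
        have hs := (hasSum_geometric_of_lt_one (r := (1/4:ℝ)) (by norm_num) (by norm_num)).mul_left (s0 ^ 4 / 4)
        rw [← ENNReal.ofReal_tsum_of_nonneg (fun k => by positivity) hs.summable, hs.tsum_eq,
          ← ENNReal.ofReal_add (by positivity) (by positivity)]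
        apply ENNReal.ofReal_le_ofReal
        unfold M4
        rw [← hl, ← hs0]
        have : 0 ≤ s0 ^ 4 := by positivity
        nlinarith

end CLTU

namespace CLTU
open Set

lemma exp_cub {x : ℝ} (hx : |x| ≤ 1) : 1 + x + x ^ 2 / 2 - |x| ^ 3 ≤ Real.exp x := by
  have := Real.exp_bound hx (n := 3) (by norm_num)
  simp [Finset.sum_range_succ, Nat.factorial] at this
  have h2 := (abs_le.mp this).1
  have h3 : 0 ≤ |x| ^ 3 := by positivity
  nlinarith

lemma exp_sq {x : ℝ} (h0 : 0 ≤ x) (hx : x ≤ 1) : Real.exp x ≤ 1 + x + x ^ 2 := by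
  have := Real.exp_bound (x := x) (by rw [abs_of_nonneg h0]; exact hx) (n := 2) (by norm_num)
  simp [Finset.sum_range_succ, Nat.factorial] at this
  have h2 := (abs_le.mp this).2
  nlinarith

lemma var_abs {Ω : Type*} [MeasurableSpace Ω] (μ : Measure Ω) [IsProbabilityMeasure μ]
    (T R : Ω → ℝ) (hT : Measurable T) (hR : Measurable R) (B : ℝ) (hB : 1 ≤ B)
    (bT : ∀ x, |T x| ≤ B) (R0 : ∀ x, 0 ≤ R x) (bR : ∀ x, R x ≤ B) (hz : ∫ x, T x ∂μ = 0)
    (H : ∀ δ : ℝ, 0 < δ → (∫ x, Real.exp (δ * T x) ∂μ) * (∫ x, Real.exp (-(δ * T x)) ∂μ) ≤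
      (∫ x, Real.exp (δ ^ 2 * R x) ∂μ) ^ 2) :
    ∫ x, T x ^ 2 ∂μ ≤ 2 * ∫ x, R x ∂μ := by
  have ib : ∀ f : Ω → ℝ, Measurable f → ∀ c, (∀ x, |f x| ≤ c) → Integrable f μ := by
    intro f hf c hc
    exact Integrable.of_bound hf.aestronglyMeasurable c (ae_of_all _ hc)
  have iT : Integrable T μ := ib T hT B bT
  have iT2 : Integrable (fun x => T x ^ 2) μ := ib _ (hT.pow_const 2) (B ^ 2) (fun x => by
    rw [abs_pow]; gcongr; exact bT x)
  have iR : Integrable R μ := ib R hR B (fun x => by rw [abs_of_nonneg (R0 x)]; exact bR x)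
  set V := ∫ x, T x ^ 2 ∂μ with hV
  set W := ∫ x, R x ∂μ with hW
  have V0 : 0 ≤ V := integral_nonneg fun x => sq_nonneg _
  have W0 : 0 ≤ W := integral_nonneg R0
  have key : ∀ δ : ℝ, 0 < δ → δ * B ≤ 1 → V / 2 ≤ W + δ * (2 * B ^ 3) := by
    intro δ hδ hd
    have hδ1 : δ ≤ 1 := by nlinarith
    have low : ∀ (s : ℝ), (s = δ ∨ s = -δ) → 1 + δ ^ 2 * V / 2 - δ ^ 3 * B ^ 3 ≤ ∫ x, Real.exp (s * T x) ∂μ := by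
      intro s hs
      have as : |s| = δ := by rcases hs with rfl | rfl <;> simp [abs_of_pos hδ]
      have hx1 : ∀ x, |s * T x| ≤ δ * B := by
        intro x
        rw [abs_mul, as]
        gcongr
        exact bT x
      have s2 : s ^ 2 = δ ^ 2 := by rcases hs with rfl | rfl <;> ring
      have hI : Integrable (fun x => 1 + s * T x + (δ ^ 2 / 2) * T x ^ 2 - δ ^ 3 * B ^ 3) μ :=
        (((integrable_const 1).add (iT.const_mul s)).add (iT2.const_mul _)).sub (integrable_const _)
      have e : ∫ x, (1 + s * T x + (δ ^ 2 / 2) * T x ^ 2 - δ ^ 3 * B ^ 3) ∂μ = 1 + δ ^ 2 * V / 2 - δ ^ 3 * B ^ 3 := by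
        have j1 : Integrable (fun x => 1 + s * T x) μ := (integrable_const 1).add (iT.const_mul s)
        have j2 : Integrable (fun x => 1 + s * T x + (δ ^ 2 / 2) * T x ^ 2) μ := j1.add (iT2.const_mul _)
        rw [integral_sub j2 (integrable_const _), integral_add j1 (iT2.const_mul _),
          integral_add (integrable_const 1) (iT.const_mul s), integral_const_mul, integral_const_mul, hz]
        simp
        ring
      rw [← e]
      refine integral_mono hI ?_ ?_
      · refine ib _ (by fun_prop) (Real.exp 1) fun x => ?_
        rw [abs_of_pos (Real.exp_pos _)]
        apply Real.exp_le_exp.mpr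
        exact (le_abs_self _).trans ((hx1 x).trans hd)
      · intro x
        have h1 := exp_cub ((hx1 x).trans hd)
        have h2 : |s * T x| ^ 3 ≤ (δ * B) ^ 3 := by
          gcongr
          exact hx1 x
        have h3 : (s * T x) ^ 2 = δ ^ 2 * T x ^ 2 := by rw [mul_pow, s2]
        simp only
        rw [h3] at h1
        rw [mul_pow] at h2
        linarith
    have up : ∫ x, Real.exp (δ ^ 2 * R x) ∂μ ≤ 1 + δ ^ 2 * W + δ ^ 4 * B ^ 2 := by
      have hx0 : ∀ x, 0 ≤ δ ^ 2 * R x := fun x => mul_nonneg (sq_nonneg _) (R0 x)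
      have hx2 : ∀ x, δ ^ 2 * R x ≤ δ ^ 2 * B := fun x => by
        gcongr
        exact bR x
      have hx1 : ∀ x, δ ^ 2 * R x ≤ 1 := fun x => by
        have := hx2 x
        nlinarith
      have e : ∫ x, (1 + δ ^ 2 * R x + δ ^ 4 * B ^ 2) ∂μ = 1 + δ ^ 2 * W + δ ^ 4 * B ^ 2 := by
        have j1 : Integrable (fun x => 1 + δ ^ 2 * R x) μ := (integrable_const 1).add (iR.const_mul _)
        rw [integral_add j1 (integrable_const _),
          integral_add (integrable_const 1) (iR.const_mul _), integral_const_mul, ← hW]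
        simp
      rw [← e]
      refine integral_mono ?_ (((integrable_const 1).add (iR.const_mul _)).add (integrable_const _)) ?_
      · refine ib _ (by fun_prop) (Real.exp 1) fun x => ?_
        rw [abs_of_pos (Real.exp_pos _)]
        exact Real.exp_le_exp.mpr (hx1 x)
      · intro x
        have h1 := exp_sq (hx0 x) (hx1 x)
        have h2 : (δ ^ 2 * R x) ^ 2 ≤ (δ ^ 2 * B) ^ 2 := by
          have := hx0 x
          have := hx2 x
          gcongr
        simp only
        nlinarith
    have l1 := low δ (Or.inl rfl)
    have l2 := low (-δ) (Or.inr rfl)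
    simp only [neg_mul] at l2
    have hh := H δ hδ
    have d3 : δ ^ 3 * B ^ 3 ≤ 1 := by
      rw [← mul_pow]
      exact pow_le_one₀ (by positivity) hd
    have L0 : 0 ≤ 1 + δ ^ 2 * V / 2 - δ ^ 3 * B ^ 3 := by
      have : 0 ≤ δ ^ 2 * V / 2 := by positivity
      linarith
    have hL : (1 + δ ^ 2 * V / 2 - δ ^ 3 * B ^ 3) ^ 2 ≤ (1 + δ ^ 2 * W + δ ^ 4 * B ^ 2) ^ 2 := by
      calc _ = (1 + δ ^ 2 * V / 2 - δ ^ 3 * B ^ 3) * (1 + δ ^ 2 * V / 2 - δ ^ 3 * B ^ 3) := by ring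
        _ ≤ _ := mul_le_mul l1 l2 L0 (L0.trans l1)
        _ ≤ _ := hh
        _ ≤ _ := by
          have : 0 ≤ ∫ x, Real.exp (δ ^ 2 * R x) ∂μ := integral_nonneg fun x => Real.exp_nonneg _
          gcongr
    have hL2 := (pow_le_pow_iff_left₀ L0 (by positivity) (by norm_num)).mp hL
    have hL3 : δ ^ 2 * (V / 2) ≤ δ ^ 2 * (W + δ * B ^ 3 + δ ^ 2 * B ^ 2) := by nlinarith
    have hL4 := le_of_mul_le_mul_left hL3 (by positivity)
    have : δ ^ 2 * B ^ 2 ≤ δ * B ^ 3 := by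
      have : 0 ≤ δ * B ^ 2 := by positivity
      nlinarith
    linarith
  have lim : V / 2 ≤ W := by
    refine le_of_forall_pos_le_add fun ε hε => ?_
    have hB3 : 0 < 2 * B ^ 3 := by positivity
    have := key (min (1 / B) (ε / (2 * B ^ 3))) (by positivity) (by
      have := min_le_left (1 / B) (ε / (2 * B ^ 3))
      calc _ ≤ 1 / B * B := by gcongr
        _ = 1 := by field_simp)
    refine this.trans ?_
    gcongr
    calc _ ≤ ε / (2 * B ^ 3) * (2 * B ^ 3) := by
          gcongr
          exact min_le_right _ _
      _ = ε := by field_simp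
  linarith

end CLTU

namespace CLTU
open Set

lemma coord0 {κ a b N : ℝ} (hκ : 1 < κ) (hb : 0 < b) (hab : b ≤ a) (hN : 0 ≤ N) :
    min ((a ^ κ) ^ 2) N - min ((b ^ κ) ^ 2) N ≤
      (4 * κ * 4 ^ κ) * ((a - b) / (a + b)) * min ((((a + b) / 2) ^ κ) ^ 2) N := by
  have ha : 0 < a := lt_of_lt_of_le hb hab
  have e2 : ∀ c : ℝ, 0 < c → (c ^ κ) ^ 2 = c ^ (2 * κ) := by
    intro c hc
    rw [← Real.rpow_natCast, ← Real.rpow_mul hc.le]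
    congr 1
    push_cast
    ring
  rw [e2 a ha, e2 b hb, e2 ((a + b) / 2) (by positivity)]
  set q := b / a with hq
  have q0 : 0 < q := by positivity
  have q1 : q ≤ 1 := by rw [hq, div_le_one ha]; exact hab
  have hB : b ^ (2 * κ) = q ^ (2 * κ) * a ^ (2 * κ) := by
    rw [← Real.mul_rpow q0.le ha.le, hq, div_mul_cancel₀ _ ha.ne']
  have qk1 : q ^ (2 * κ) ≤ 1 := Real.rpow_le_one q0.le q1 (by linarith)
  have qk0 : 0 ≤ q ^ (2 * κ) := Real.rpow_nonneg q0.le _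
  set P := min (a ^ (2 * κ)) N with hP
  have P0 : 0 ≤ P := le_min (by positivity) hN
  have h1 : q ^ (2 * κ) * P ≤ min (b ^ (2 * κ)) N := by
    refine le_min ?_ ?_
    · rw [hB]; gcongr; exact min_le_left _ _
    · calc q ^ (2 * κ) * P ≤ 1 * P := by gcongr
        _ ≤ N := by rw [one_mul]; exact min_le_right _ _
  have h2 : 1 + 2 * κ * (q - 1) ≤ q ^ (2 * κ) := by
    have := one_add_mul_self_le_rpow_one_add (s := q - 1) (p := 2 * κ) (by linarith) (by linarith)
    simpa using this
  have h3 : 1 - q ≤ 2 * ((a - b) / (a + b)) := by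
    rw [hq, mul_div_assoc', le_div_iff₀ (by positivity)]
    have : (1 - b / a) * (a + b) = (a - b) * (a + b) / a := by field_simp
    rw [this, div_le_iff₀ ha]
    nlinarith
  have r0 : 0 ≤ (a - b) / (a + b) := div_nonneg (by linarith) (by linarith)
  set M := min (((a + b) / 2) ^ (2 * κ)) N with hM
  have M0 : 0 ≤ M := le_min (by positivity) hN
  have f1 : (1:ℝ) ≤ 4 ^ κ := Real.one_le_rpow (by norm_num) (by linarith)
  have h4 : P ≤ 4 ^ κ * M := by
    rw [hM, mul_min_of_nonneg _ _ (by linarith)]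
    refine le_min ?_ ?_
    · refine (min_le_left _ _).trans ?_
      have : (4:ℝ) ^ κ = 2 ^ (2 * κ) := by
        rw [Real.rpow_mul (by norm_num)]; norm_num
      rw [this, ← Real.mul_rpow (by norm_num) (by positivity)]
      exact Real.rpow_le_rpow ha.le (by linarith) (by linarith)
    · refine (min_le_right _ _).trans ?_
      nlinarith
  calc P - min (b ^ (2 * κ)) N ≤ (1 - q ^ (2 * κ)) * P := by linarith
    _ ≤ (2 * κ * (2 * ((a - b) / (a + b)))) * P := by
        gcongr
        nlinarith
    _ ≤ (2 * κ * (2 * ((a - b) / (a + b)))) * (4 ^ κ * M) := by gcongr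
    _ = _ := by ring

lemma coord1 {κ a b N : ℝ} (hκ : 1 < κ) (ha : 0 < a) (hb : 0 < b) (hN : 0 ≤ N) :
    |min ((a ^ κ) ^ 2) N - min ((b ^ κ) ^ 2) N| ≤
      (4 * κ * 4 ^ κ) * (|a - b| / (a + b)) * min ((((a + b) / 2) ^ κ) ^ 2) N := by
  have mono : ∀ {x y : ℝ}, 0 < x → x ≤ y → min ((x ^ κ) ^ 2) N ≤ min ((y ^ κ) ^ 2) N := by
    intro x y hx hxy
    have : x ^ κ ≤ y ^ κ := Real.rpow_le_rpow hx.le hxy (by linarith)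
    gcongr
  rcases le_total b a with h | h
  · rw [abs_of_nonneg (sub_nonneg.mpr (mono hb h)), abs_of_nonneg (sub_nonneg.mpr h)]
    exact coord0 hκ hb h hN
  · rw [abs_sub_comm, abs_of_nonneg (sub_nonneg.mpr (mono ha h)), abs_sub_comm a b,
      abs_of_nonneg (sub_nonneg.mpr h), add_comm a b]
    exact coord0 hκ ha h hN

lemma wt_exp {κ a b : ℝ} (hκ : 1 < κ) (ha : 0 < a) (hb : 0 < b) :
    Real.exp ((κ - 1) / 2 * (|a - b| / (a + b)) ^ 2) ≤ wt κ a b := by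
  unfold wt
  rw [mul_comm, Real.exp_mul]
  refine Real.rpow_le_rpow (Real.exp_nonneg _) ?_ (by linarith)
  have h1 : a * b / ((a + b) / 2) ^ 2 ≤ Real.exp (-(|a - b| / (a + b)) ^ 2) := by
    have := Real.add_one_le_exp (-(|a - b| / (a + b)) ^ 2)
    refine le_trans (le_of_eq ?_) this
    rw [div_pow |a - b|, sq_abs]
    field_simp
    ring
  rw [Real.exp_neg] at h1
  have := inv_anti₀ (by positivity) h1
  rwa [inv_inv, inv_div] at this

noncomputable def KK (κ : ℝ) : ℝ := (4 * κ * 4 ^ κ) ^ 2 / (8 * (κ - 1))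

lemma KK_nonneg {κ : ℝ} (hκ : 1 < κ) : 0 ≤ KK κ := by
  unfold KK
  exact div_nonneg (sq_nonneg _) (by linarith)

lemma coord2 {κ a b N : ℝ} (hκ : 1 < κ) (ha : 0 < a) (hb : 0 < b) (hN : 0 ≤ N) (w : ℝ) :
    w * (min ((a ^ κ) ^ 2) N - min ((b ^ κ) ^ 2) N) ≤
      2 * ((κ - 1) / 2 * (|a - b| / (a + b)) ^ 2 +
        KK κ * w ^ 2 * (min ((((a + b) / 2) ^ κ) ^ 2) N) ^ 2) := by
  have h1 := coord1 hκ ha hb hN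
  set r := |a - b| / (a + b)
  set M := min ((((a + b) / 2) ^ κ) ^ 2) N
  set c := 4 * κ * 4 ^ κ with hc
  have h2 : w * (min ((a ^ κ) ^ 2) N - min ((b ^ κ) ^ 2) N) ≤ |w| * (c * r * M) := by
    refine (le_abs_self _).trans ?_
    rw [abs_mul]
    gcongr
  refine h2.trans ?_
  unfold KK
  rw [← hc]
  have k : 0 < κ - 1 := by linarith
  have e : 2 * ((κ - 1) / 2 * r ^ 2 + c ^ 2 / (8 * (κ - 1)) * w ^ 2 * M ^ 2) - |w| * (c * r * M)
      = ((κ - 1) * r - |w| * c * M / 2) ^ 2 / (κ - 1) := by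
    rw [← sq_abs w]
    field_simp
    ring
  have : 0 ≤ ((κ - 1) * r - |w| * c * M / 2) ^ 2 / (κ - 1) := by positivity
  linarith

end CLTU

namespace CLTU
open Set

lemma var_trunc {κ : ℝ} {n : ℕ} {μ : Measure (Fin n → ℝ)} {u : (Fin n → ℝ) → ℝ} (h : Good κ μ u)
    (α : Fin n → ℝ) (N : ℝ) (hN : 0 ≤ N) :
    ∫ x, (∑ i, α i * min (x i ^ 2) N - ∫ y, ∑ i, α i * min (y i ^ 2) N ∂μ) ^ 2 ∂μ ≤
      2 * ∫ x, KK κ * ∑ i, α i ^ 2 * (min (x i ^ 2) N) ^ 2 ∂μ := by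
  have hκ := h.hκ
  have := h.prob
  set S : (Fin n → ℝ) → ℝ := fun x => ∑ i, α i * min (x i ^ 2) N with hS
  set R : (Fin n → ℝ) → ℝ := fun x => KK κ * ∑ i, α i ^ 2 * (min (x i ^ 2) N) ^ 2 with hR
  set c0 := ∫ y, S y ∂μ with hc0
  have mS : Measurable S := by
    refine Finset.measurable_sum _ fun i _ => ?_
    exact (Measurable.min (by fun_prop) measurable_const).const_mul _
  have mR : Measurable R := by
    refine Measurable.const_mul (Finset.measurable_sum _ fun i _ => ?_) _
    exact ((Measurable.min (by fun_prop) measurable_const).pow_const 2).const_mul _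
  have m0 : ∀ y : ℝ, 0 ≤ min (y ^ 2) N := fun y => le_min (sq_nonneg _) hN
  have mN : ∀ y : ℝ, min (y ^ 2) N ≤ N := fun y => min_le_right _ _
  have bS : ∀ x, |S x| ≤ ∑ i, |α i| * N := by
    intro x
    refine (Finset.abs_sum_le_sum_abs _ _).trans (Finset.sum_le_sum fun i _ => ?_)
    rw [abs_mul, abs_of_nonneg (m0 _)]
    gcongr
    exact mN _
  have bR : ∀ x, R x ≤ KK κ * ∑ i, α i ^ 2 * N ^ 2 := by
    intro x
    refine mul_le_mul_of_nonneg_left (Finset.sum_le_sum fun i _ => ?_) (KK_nonneg hκ)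
    have := m0 (x i)
    have := mN (x i)
    gcongr
  have R0 : ∀ x, 0 ≤ R x := fun x =>
    mul_nonneg (KK_nonneg hκ) (Finset.sum_nonneg fun i _ => by positivity)
  set B1 := ∑ i, |α i| * N
  set B2 := KK κ * ∑ i, α i ^ 2 * N ^ 2
  have B10 : 0 ≤ B1 := Finset.sum_nonneg fun i _ => by positivity
  have B20 : 0 ≤ B2 := mul_nonneg (KK_nonneg hκ) (Finset.sum_nonneg fun i _ => by positivity)
  have iS : Integrable S μ := Integrable.of_bound mS.aestronglyMeasurable B1 (ae_of_all _ bS)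
  have hz : ∫ x, (S x - c0) ∂μ = 0 := by
    rw [integral_sub iS (integrable_const _)]
    simp [hc0]
  have bT : ∀ x, |S x - c0| ≤ B1 + |c0| := fun x => (abs_sub _ _).trans (by linarith [bS x])
  have evS : ∀ e : Fin n → Bool, ∀ x, S (fun i => sg e i * x i) = S x := by
    intro e x
    simp only [hS, mul_pow, sg_sq, one_mul]
  have evR : ∀ e : Fin n → Bool, ∀ x, R (fun i => sg e i * x i) = R x := by
    intro e x
    simp only [hR, mul_pow, sg_sq, one_mul]
  refine var_abs μ (fun x => S x - c0) R (mS.sub_const _) mR (1 + B1 + |c0| + B2)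
    (by have := abs_nonneg c0; linarith) (fun x => (bT x).trans (by linarith))
    R0 (fun x => (bR x).trans (by have := abs_nonneg c0; linarith)) hz ?_
  intro δ hδ
  have mT : Measurable fun x => S x - c0 := mS.sub_const _
  have I : ∀ f : (Fin n → ℝ) → ℝ, Measurable f → ∀ c, (∀ x, f x ≤ c) →
      ENNReal.ofReal (∫ x, Real.exp (f x) ∂μ) = ∫⁻ x, ENNReal.ofReal (Real.exp (f x)) ∂μ := by
    intro f hf c hc
    refine ofReal_integral_eq_lintegral_ofReal ?_ (ae_of_all _ fun x => Real.exp_nonneg _)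
    refine Integrable.of_bound (by fun_prop) (Real.exp c) (ae_of_all _ fun x => ?_)
    rw [Real.norm_eq_abs, abs_of_pos (Real.exp_pos _)]
    exact Real.exp_le_exp.mpr (hc x)
  have key := h.plmu (φ := fun x => ENNReal.ofReal (Real.exp (δ * (S x - c0))))
    (ψ := fun x => ENNReal.ofReal (Real.exp (-(δ * (S x - c0)))))
    (χ := fun x => ENNReal.ofReal (Real.exp (δ ^ 2 * R x)))
    (by fun_prop) (by fun_prop) (by fun_prop)
    (fun e x => by simp only [evS]) (fun e x => by simp only [evS]) (fun e x => by simp only [evR]) (by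
      intro a b ha hb
      rw [← ENNReal.ofReal_mul (Real.exp_nonneg _), ← ENNReal.ofReal_prod_of_nonneg
        (fun i _ => (zero_le_one.trans (wt_ge_one hκ (ha i) (hb i)))),
        ← ENNReal.ofReal_mul (Finset.prod_nonneg fun i _ => (zero_le_one.trans (wt_ge_one hκ (ha i) (hb i)))),
        ← ENNReal.ofReal_pow (mul_nonneg (Finset.prod_nonneg fun i _ => (zero_le_one.trans (wt_ge_one hκ (ha i) (hb i)))) (Real.exp_nonneg _))]
      apply ENNReal.ofReal_le_ofReal
      have hw : Real.exp (∑ i, (κ - 1) / 2 * (|a i - b i| / (a i + b i)) ^ 2) ≤ ∏ i, wt κ (a i) (b i) := by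
        rw [Real.exp_sum]
        exact Finset.prod_le_prod (fun i _ => Real.exp_nonneg _) fun i _ => wt_exp hκ (ha i) (hb i)
      calc _ ≤ (Real.exp (∑ i, (κ - 1) / 2 * (|a i - b i| / (a i + b i)) ^ 2) *
            Real.exp (δ ^ 2 * R fun i => ((a i + b i) / 2) ^ κ)) ^ 2 := by
            rw [← Real.exp_add, ← Real.exp_add, ← Real.exp_nat_mul]
            apply Real.exp_le_exp.mpr
            have hs := Finset.sum_le_sum fun i (_ : i ∈ Finset.univ) =>
              coord2 hκ (ha i) (hb i) hN (δ * α i)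
            rw [← Finset.mul_sum, Finset.sum_add_distrib] at hs
            have e1 : ∑ i, δ * α i * (min ((a i ^ κ) ^ 2) N - min ((b i ^ κ) ^ 2) N) =
                δ * (S (fun i => a i ^ κ) - c0) + -(δ * (S (fun i => b i ^ κ) - c0)) := by
              simp only [hS]
              have : δ * (∑ i, α i * min ((a i ^ κ) ^ 2) N - c0) + -(δ * (∑ i, α i * min ((b i ^ κ) ^ 2) N - c0))
                = δ * (∑ i, α i * min ((a i ^ κ) ^ 2) N - ∑ i, α i * min ((b i ^ κ) ^ 2) N) := by ring
              rw [this, ← Finset.sum_sub_distrib, Finset.mul_sum]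
              refine Finset.sum_congr rfl fun i _ => by ring
            have e2 : ∑ i, KK κ * (δ * α i) ^ 2 * (min ((((a i + b i) / 2) ^ κ) ^ 2) N) ^ 2 =
                δ ^ 2 * R fun i => ((a i + b i) / 2) ^ κ := by
              simp only [hR]
              rw [Finset.mul_sum, Finset.mul_sum]
              refine Finset.sum_congr rfl fun i _ => by ring
            rw [e1, e2] at hs
            exact_mod_cast hs
        _ ≤ _ := by gcongr)
  rw [← I _ (by fun_prop) (δ * (B1 + |c0|)) (fun x => by
      gcongr; exact (le_abs_self _).trans (bT x)),
    ← I _ (by fun_prop) (δ * (B1 + |c0|)) (fun x => by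
      rw [← mul_neg]; gcongr; exact (neg_le_abs _).trans (bT x)),
    ← I _ (by fun_prop) (δ ^ 2 * B2) (fun x => by gcongr; exact bR x),
    ← ENNReal.ofReal_mul (integral_nonneg fun x => Real.exp_nonneg _),
    ← ENNReal.ofReal_pow (integral_nonneg fun x => Real.exp_nonneg _),
    ENNReal.ofReal_le_ofReal_iff (sq_nonneg _)] at key
  exact key

lemma mom4_int {κ : ℝ} {n : ℕ} {μ : Measure (Fin n → ℝ)} {u : (Fin n → ℝ) → ℝ} (h : Good κ μ u)
    (i : Fin n) (h2i : Integrable (fun x : Fin n → ℝ => x i ^ 2) μ) (h2 : ∫ x, x i ^ 2 ∂μ = 1) :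
    Integrable (fun x : Fin n → ℝ => x i ^ 4) μ ∧ ∫ x, x i ^ 4 ∂μ ≤ M4 κ := by
  have h3 := mom4 h i (by
    rw [← ofReal_integral_eq_lintegral_ofReal h2i (ae_of_all _ fun x => sq_nonneg _), h2]; simp)
  have p4 : ∀ x : Fin n → ℝ, 0 ≤ x i ^ 4 := fun x => by positivity
  have h4 : Integrable (fun x : Fin n → ℝ => x i ^ 4) μ := by
    refine ⟨((measurable_pi_apply i).pow_const 4).aestronglyMeasurable, ?_⟩
    rw [hasFiniteIntegral_iff_ofReal (ae_of_all _ p4)]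
    exact lt_of_le_of_lt h3 ENNReal.ofReal_lt_top
  refine ⟨h4, ?_⟩
  rw [← ofReal_integral_eq_lintegral_ofReal h4 (ae_of_all _ p4)] at h3
  exact (ENNReal.ofReal_le_ofReal_iff (M4_pos κ).le).mp h3

lemma var_full {κ : ℝ} {n : ℕ} {μ : Measure (Fin n → ℝ)} {u : (Fin n → ℝ) → ℝ} (h : Good κ μ u)
    (h2i : ∀ i, Integrable (fun x : Fin n → ℝ => x i ^ 2) μ) (h2 : ∀ i, ∫ x, x i ^ 2 ∂μ = 1)
    (α : Fin n → ℝ) :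
    Integrable (fun x => (∑ i, α i * x i ^ 2 - ∑ i, α i) ^ 2) μ ∧
    ∫ x, (∑ i, α i * x i ^ 2 - ∑ i, α i) ^ 2 ∂μ ≤ 2 * (KK κ * M4 κ * ∑ i, α i ^ 2) := by
  have hκ := h.hκ
  have := h.prob
  have m4 := fun i => mom4_int h i (h2i i) (h2 i)
  have L2 : ∀ i, MemLp (fun x : Fin n → ℝ => x i ^ 2) 2 μ := by
    intro i
    rw [memLp_two_iff_integrable_sq ((measurable_pi_apply i).pow_const 2).aestronglyMeasurable]
    refine (m4 i).1.congr (ae_of_all _ fun x => by simp only; ring)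
  have m0 : ∀ (y : ℝ) (N : ℕ), 0 ≤ min (y ^ 2) (N:ℝ) := fun y N => le_min (sq_nonneg _) (Nat.cast_nonneg _)
  set c : ℕ → ℝ := fun N => ∫ y, ∑ i, α i * min (y i ^ 2) (N:ℝ) ∂μ with hc
  have mm : ∀ N : ℕ, Measurable fun x : Fin n → ℝ => ∑ i, α i * min (x i ^ 2) (N:ℝ) := fun N => by
    refine Finset.measurable_sum _ fun i _ => ?_
    exact (Measurable.min (by fun_prop) measurable_const).const_mul _
  have bd : ∀ (N : ℕ) (x : Fin n → ℝ), |∑ i, α i * min (x i ^ 2) (N:ℝ)| ≤ ∑ i, |α i| * x i ^ 2 := by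
    intro N x
    refine (Finset.abs_sum_le_sum_abs _ _).trans (Finset.sum_le_sum fun i _ => ?_)
    rw [abs_mul, abs_of_nonneg (m0 _ _)]
    gcongr
    exact min_le_left _ _
  have iA : Integrable (fun x : Fin n → ℝ => ∑ i, |α i| * x i ^ 2) μ :=
    integrable_finsetSum _ fun i _ => (h2i i).const_mul _
  have ptl : ∀ x : Fin n → ℝ, Filter.Tendsto (fun N : ℕ => ∑ i, α i * min (x i ^ 2) (N:ℝ)) Filter.atTop
      (nhds (∑ i, α i * x i ^ 2)) := by
    intro x
    refine tendsto_finsetSum _ fun i _ => ?_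
    refine Filter.Tendsto.const_mul _ ?_
    refine tendsto_const_nhds.congr' ?_
    filter_upwards [Filter.eventually_ge_atTop ⌈x i ^ 2⌉₊] with N hN
    rw [min_eq_left]
    exact Nat.ceil_le.mp hN
  have ES : ∫ x : Fin n → ℝ, ∑ i, α i * x i ^ 2 ∂μ = ∑ i, α i := by
    rw [integral_finsetSum _ fun i _ => (h2i i).const_mul _]
    refine Finset.sum_congr rfl fun i _ => ?_
    rw [integral_const_mul, h2, mul_one]
  have cl : Filter.Tendsto c Filter.atTop (nhds (∑ i, α i)) := by
    rw [← ES]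
    refine tendsto_integral_of_dominated_convergence _ (fun N => (mm N).aestronglyMeasurable) iA
      (fun N => ae_of_all _ (bd N)) (ae_of_all _ ptl)
  have cb : ∀ N, |c N| ≤ ∑ i, |α i| := by
    intro N
    refine (abs_integral_le_integral_abs).trans ?_
    refine (integral_mono_of_nonneg (ae_of_all _ fun x => abs_nonneg _) iA (ae_of_all _ (bd N))).trans ?_
    rw [integral_finsetSum _ fun i _ => (h2i i).const_mul _]
    refine le_of_eq (Finset.sum_congr rfl fun i _ => ?_)
    rw [integral_const_mul, h2, mul_one]
  have iF : Integrable (fun x : Fin n → ℝ => (∑ i, |α i| * x i ^ 2 + ∑ i, |α i|) ^ 2) μ := by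
    have : MemLp (fun x : Fin n → ℝ => ∑ i, |α i| * x i ^ 2 + ∑ i, |α i|) 2 μ :=
      (memLp_finsetSum _ fun i _ => (L2 i).const_mul _).add (memLp_const _)
    exact this.integrable_sq
  have lim : Filter.Tendsto (fun N : ℕ => ∫ x : Fin n → ℝ, (∑ i, α i * min (x i ^ 2) (N:ℝ) - c N) ^ 2 ∂μ)
      Filter.atTop (nhds (∫ x : Fin n → ℝ, (∑ i, α i * x i ^ 2 - ∑ i, α i) ^ 2 ∂μ)) := by
    refine tendsto_integral_of_dominated_convergence _
      (fun N => (((mm N).sub_const _).pow_const 2).aestronglyMeasurable) iF ?_ ?_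
    · intro N
      refine ae_of_all _ fun x => ?_
      rw [Real.norm_eq_abs, abs_pow]
      have h1 := bd N x
      have h2 := cb N
      have h3 := abs_sub (∑ i, α i * min (x i ^ 2) (N:ℝ)) (c N)
      gcongr
      linarith
    · refine ae_of_all _ fun x => ?_
      exact ((ptl x).sub cl).pow 2
  constructor
  · have : MemLp (fun x : Fin n → ℝ => ∑ i, α i * x i ^ 2 - ∑ i, α i) 2 μ :=
      (memLp_finsetSum _ fun i _ => (L2 i).const_mul _).sub (memLp_const _)
    exact this.integrable_sq
  · refine le_of_tendsto' lim fun N => ?_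
    refine (var_trunc h α N (Nat.cast_nonneg _)).trans ?_
    rw [integral_const_mul]
    have : ∫ x : Fin n → ℝ, ∑ i, α i ^ 2 * (min (x i ^ 2) (N:ℝ)) ^ 2 ∂μ ≤ M4 κ * ∑ i, α i ^ 2 := by
      refine (integral_mono_of_nonneg (g := fun x => ∑ i, α i ^ 2 * x i ^ 4)
        (ae_of_all _ fun x => Finset.sum_nonneg fun i _ => by positivity)
        (integrable_finsetSum _ fun i _ => (m4 i).1.const_mul _)
        (ae_of_all _ fun x => Finset.sum_le_sum fun i _ => ?_)).trans ?_
      · have h1 := m0 (x i) N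
        have h2 : min (x i ^ 2) (N:ℝ) ≤ x i ^ 2 := min_le_left _ _
        rw [show x i ^ 4 = (x i ^ 2) ^ 2 by ring]
        gcongr
      · rw [integral_finsetSum _ fun i _ => (m4 i).1.const_mul _, Finset.mul_sum]
        refine Finset.sum_le_sum fun i _ => ?_
        rw [integral_const_mul, mul_comm]
        gcongr
        exact (m4 i).2
    have k := KK_nonneg hκ
    rw [mul_assoc]
    gcongr

end CLTU

namespace CLTU
open Set
open scoped BigOperators

noncomputable def AA {n : ℕ} (θ : Fin n → ℝ) (t : ℝ) (x : Fin n → ℝ) : ℝ :=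
  𝔼 e, (if t ≤ RW (fun i => θ i * x i) e then (1:ℝ) else 0)

lemma AA_nonneg {n : ℕ} (θ : Fin n → ℝ) (t : ℝ) (x : Fin n → ℝ) : 0 ≤ AA θ t x := by
  refine Finset.expect_nonneg fun e _ => ?_
  split_ifs <;> norm_num

lemma AA_le_one {n : ℕ} (θ : Fin n → ℝ) (t : ℝ) (x : Fin n → ℝ) : AA θ t x ≤ 1 := by
  refine Finset.expect_le Finset.univ_nonempty fun e _ => ?_
  split_ifs <;> norm_num

lemma pointwise {n : ℕ} (θ : Fin n → ℝ) (t : ℝ) (x : Fin n → ℝ) :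
    |AA θ t x - Q t - (t * ph t / 2) * (∑ i, θ i ^ 2 * x i ^ 2 - 1)| ≤
      360 * ∑ i, |θ i| ^ 3 * |x i| ^ 3 + 11 * (∑ i, θ i ^ 2 * x i ^ 2 - 1) ^ 2 := by
  set s := ∑ i, θ i ^ 2 * x i ^ 2 with hs
  have s0 : 0 ≤ s := Finset.sum_nonneg fun i _ => by positivity
  have hm := mix t s s0
  have hP : 0 ≤ ∑ i, |θ i| ^ 3 * |x i| ^ 3 := Finset.sum_nonneg fun i _ => by positivity
  have h1 : |AA θ t x - Q (t / √s)| ≤ 360 * ∑ i, |θ i| ^ 3 * |x i| ^ 3 + 4 * (s - 1) ^ 2 := by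
    by_cases h : 1 / 2 ≤ s
    · have sp : 0 < √s := Real.sqrt_pos.mpr (by linarith)
      have ss : √s ^ 2 = s := Real.sq_sqrt s0
      have hb := be_gen (fun i => θ i * x i) (√s) sp (by
        rw [ss, hs]
        exact Finset.sum_congr rfl fun i _ => by ring) t
      have e : ∑ i, |θ i * x i| ^ 3 = ∑ i, |θ i| ^ 3 * |x i| ^ 3 :=
        Finset.sum_congr rfl fun i _ => by rw [abs_mul, mul_pow]
      rw [e] at hb
      have h3 : 1 / 3 ≤ √s ^ 3 := by
        have : (7:ℝ) / 10 ≤ √s := Real.le_sqrt_of_sq_le (by norm_num; linarith)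
        calc (1:ℝ) / 3 ≤ (7 / 10) ^ 3 := by norm_num
          _ ≤ _ := by gcongr
      have h4 : 120 * (∑ i, |θ i| ^ 3 * |x i| ^ 3) / √s ^ 3 ≤ 360 * ∑ i, |θ i| ^ 3 * |x i| ^ 3 := by
        rw [div_le_iff₀ (by positivity)]
        nlinarith
      have : 0 ≤ 4 * (s - 1) ^ 2 := by positivity
      unfold AA
      linarith
    · push Not at h
      have a0 := AA_nonneg θ t x
      have a1 := AA_le_one θ t x
      have q0 := Q_nonneg (t / √s)
      have q1 := Q_le_one (t / √s)
      have : |AA θ t x - Q (t / √s)| ≤ 1 := by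
        rw [abs_le]; constructor <;> linarith
      nlinarith
  have e : AA θ t x - Q t - (t * ph t / 2) * (s - 1) = (AA θ t x - Q (t / √s)) +
      (Q (t / √s) - Q t - (t * ph t / 2) * (s - 1)) := by ring
  rw [e]
  refine (abs_add_le _ _).trans ?_
  linarith

lemma half_meas {n : ℕ} (θ : Fin n → ℝ) (t : ℝ) (e : Fin n → Bool) :
    MeasurableSet {x : Fin n → ℝ | t ≤ RW (fun i => θ i * x i) e} := by
  refine measurableSet_le measurable_const ?_
  unfold RW
  fun_prop

lemma AA_eq {n : ℕ} (θ : Fin n → ℝ) (t : ℝ) (x : Fin n → ℝ) : AA θ t x =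
    (∑ e : Fin n → Bool, {x : Fin n → ℝ | t ≤ RW (fun i => θ i * x i) e}.indicator (fun _ => (1:ℝ)) x) /
      Fintype.card (Fin n → Bool) := by
  unfold AA
  rw [Fintype.expect_eq_sum_div_card]
  congr 1

lemma AA_int {κ : ℝ} {n : ℕ} {μ : Measure (Fin n → ℝ)} {u : (Fin n → ℝ) → ℝ} (h : Good κ μ u)
    (θ : Fin n → ℝ) (t : ℝ) : Integrable (AA θ t) μ ∧
      ∫ x, AA θ t x ∂μ = (μ {x | t ≤ ∑ i, θ i * x i}).toReal := by
  have := h.prob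
  have hI : ∀ e : Fin n → Bool, Integrable ({x : Fin n → ℝ | t ≤ RW (fun i => θ i * x i) e}.indicator
      (fun _ => (1:ℝ))) μ := fun e => (integrable_const 1).indicator (half_meas θ t e)
  have hf : AA θ t = fun x => (∑ e : Fin n → Bool, {x : Fin n → ℝ | t ≤ RW (fun i => θ i * x i) e}.indicator (fun _ => (1:ℝ)) x) /
      Fintype.card (Fin n → Bool) := funext fun x => AA_eq θ t x
  rw [hf]
  constructor
  · exact (integrable_finsetSum _ fun e _ => hI e).div_const _
  · rw [integral_div, integral_finsetSum _ fun e _ => hI e]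
    have : ∀ e : Fin n → Bool, ∫ x, {x : Fin n → ℝ | t ≤ RW (fun i => θ i * x i) e}.indicator
      (fun _ => (1:ℝ)) x ∂μ = (μ {x | t ≤ ∑ i, θ i * x i}).toReal := by
      intro e
      rw [integral_indicator (half_meas θ t e)]
      simp only [integral_const, MeasurableSet.univ, measureReal_restrict_apply, univ_inter, smul_eq_mul, mul_one]
      have hm : MeasurableSet {x : Fin n → ℝ | t ≤ ∑ i, θ i * x i} :=
        measurableSet_le measurable_const (by fun_prop)
      conv_rhs => rw [← h.sym e, Measure.map_apply (flip_meas e) hm]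
      unfold Measure.real
      congr 2
      ext x
      simp only [mem_ofPred_eq, mem_preimage, RW]
      have : ∑ i, θ i * x i * sg e i = ∑ i, θ i * (sg e i * x i) :=
        Finset.sum_congr rfl fun i _ => by ring
      rw [this]
    simp_rw [this]
    rw [Finset.sum_const, Finset.card_univ, nsmul_eq_mul]
    field_simp

lemma core {κ : ℝ} {n : ℕ} {μ : Measure (Fin n → ℝ)} {u : (Fin n → ℝ) → ℝ} (h : Good κ μ u)
    (h2i : ∀ i, Integrable (fun x : Fin n → ℝ => x i ^ 2) μ) (h2 : ∀ i, ∫ x, x i ^ 2 ∂μ = 1)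
    (θ : Fin n → ℝ) (hθ : ∑ k, θ k ^ 2 = 1) (t : ℝ) :
    |(μ {x | t ≤ ∑ i, θ i * x i}).toReal - Q t| ≤
      (360 * (1 + M4 κ) + 22 * (KK κ * M4 κ)) * ∑ k, |θ k| ^ 3 := by
  have := h.prob
  have hκ := h.hκ
  obtain ⟨iA, eA⟩ := AA_int h θ t
  obtain ⟨iV, hV⟩ := var_full h h2i h2 (fun i => θ i ^ 2)
  rw [hθ] at iV hV
  have m4 := fun i => mom4_int h i (h2i i) (h2 i)
  set D := t * ph t / 2
  have iS : Integrable (fun x : Fin n → ℝ => ∑ i, θ i ^ 2 * x i ^ 2) μ :=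
    integrable_finsetSum _ fun i _ => (h2i i).const_mul _
  have iS1 : Integrable (fun x : Fin n → ℝ => ∑ i, θ i ^ 2 * x i ^ 2 - 1) μ := iS.sub (integrable_const _)
  have eS1 : ∫ x : Fin n → ℝ, (∑ i, θ i ^ 2 * x i ^ 2 - 1) ∂μ = 0 := by
    rw [integral_sub iS (integrable_const _), integral_finsetSum _ fun i _ => (h2i i).const_mul _]
    simp_rw [integral_const_mul, h2, mul_one]
    simp [hθ]
  have eL : ∫ x, (AA θ t x - Q t - D * (∑ i, θ i ^ 2 * x i ^ 2 - 1)) ∂μ =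
      (μ {x | t ≤ ∑ i, θ i * x i}).toReal - Q t := by
    have j : Integrable (fun x => AA θ t x - Q t) μ := iA.sub (integrable_const _)
    rw [integral_sub j (iS1.const_mul D), integral_sub iA (integrable_const _), integral_const_mul, eS1, eA]
    simp
  have c3 : ∀ y : ℝ, |y| ^ 3 ≤ 1 + y ^ 4 := by
    intro y
    have : y ^ 4 = |y| ^ 4 := by
      rw [show (4:ℕ) = 2 * 2 by norm_num, pow_mul, pow_mul, sq_abs]
    rw [this]
    have := abs_nonneg y
    rcases le_total |y| 1 with h | h
    · have := pow_le_one₀ (n := 3) this h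
      have : 0 ≤ |y| ^ 4 := by positivity
      linarith
    · have := pow_le_pow_right₀ h (show 3 ≤ 4 by norm_num)
      linarith
  have i3 : ∀ i, Integrable (fun x : Fin n → ℝ => |x i| ^ 3) μ := by
    intro i
    refine Integrable.mono' ((integrable_const 1).add (m4 i).1)
      ((measurable_pi_apply i).abs.pow_const 3).aestronglyMeasurable (ae_of_all _ fun x => ?_)
    rw [Real.norm_eq_abs, abs_of_nonneg (by positivity)]
    exact c3 _
  have e3 : ∀ i, ∫ x : Fin n → ℝ, |x i| ^ 3 ∂μ ≤ 1 + M4 κ := by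
    intro i
    have h1 := integral_mono (i3 i) ((integrable_const 1).add (m4 i).1) (fun x => c3 (x i))
    have h2 : ∫ x : Fin n → ℝ, (1 + x i ^ 4) ∂μ = 1 + ∫ x, x i ^ 4 ∂μ := by
      rw [integral_add (integrable_const 1) (m4 i).1]; simp
    have h3 := (m4 i).2
    calc _ ≤ ∫ x : Fin n → ℝ, (1 + x i ^ 4) ∂μ := h1
      _ ≤ _ := by rw [h2]; linarith
  have iP : Integrable (fun x : Fin n → ℝ => ∑ i, |θ i| ^ 3 * |x i| ^ 3) μ :=
    integrable_finsetSum _ fun i _ => (i3 i).const_mul _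
  have eP : ∫ x : Fin n → ℝ, ∑ i, |θ i| ^ 3 * |x i| ^ 3 ∂μ ≤ (1 + M4 κ) * ∑ k, |θ k| ^ 3 := by
    rw [integral_finsetSum _ fun i _ => (i3 i).const_mul _, Finset.mul_sum]
    refine Finset.sum_le_sum fun i _ => ?_
    rw [integral_const_mul, mul_comm]
    gcongr
    exact e3 i
  have t4 : ∑ i, (θ i ^ 2) ^ 2 ≤ ∑ k, |θ k| ^ 3 := by
    refine Finset.sum_le_sum fun i _ => ?_
    have h1 : θ i ^ 2 ≤ 1 := by
      rw [← hθ]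
      exact Finset.single_le_sum (f := fun k => θ k ^ 2) (fun k _ => sq_nonneg _) (Finset.mem_univ i)
    have h2 : |θ i| ≤ 1 := by
      rw [← sq_abs] at h1
      have := abs_nonneg (θ i)
      nlinarith
    rw [← sq_abs (θ i), ← pow_mul]
    exact pow_le_pow_of_le_one (abs_nonneg _) h2 (by norm_num)
  rw [← eL]
  refine (abs_integral_le_integral_abs).trans ?_
  refine (integral_mono_of_nonneg (ae_of_all _ fun x => abs_nonneg _)
    ((iP.const_mul 360).add (iV.const_mul 11)) (ae_of_all _ fun x => pointwise θ t x)).trans ?_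
  have e : ∫ x : Fin n → ℝ, (360 * ∑ i, |θ i| ^ 3 * |x i| ^ 3 + 11 * (∑ i, θ i ^ 2 * x i ^ 2 - 1) ^ 2) ∂μ =
      360 * (∫ x : Fin n → ℝ, ∑ i, |θ i| ^ 3 * |x i| ^ 3 ∂μ) + 11 * ∫ x : Fin n → ℝ, (∑ i, θ i ^ 2 * x i ^ 2 - 1) ^ 2 ∂μ := by
    rw [integral_add (iP.const_mul 360) (iV.const_mul 11), integral_const_mul, integral_const_mul]
  calc _ = _ := e
    _ ≤ 360 * ((1 + M4 κ) * ∑ k, |θ k| ^ 3) + 11 * (2 * (KK κ * M4 κ * ∑ k, |θ k| ^ 3)) := by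
        have k := mul_nonneg (KK_nonneg hκ) (M4_pos κ).le
        have := mul_le_mul_of_nonneg_left t4 k
        gcongr
        linarith
    _ = _ := by ring

theorem main_aux (κ : ℝ) (hκ : 1 < κ) :
    ∃ C : ℝ, 0 < C ∧
      ∀ (n : ℕ) (Ω : Type) [MeasureSpace Ω] [IsProbabilityMeasure (ℙ : Measure Ω)]
        (X : Ω → Fin n → ℝ) (u : (Fin n → ℝ) → ℝ),
        Measurable X →
        -- X has density e^{-u(x)}
        Measure.map X ℙ = (volume : Measure (Fin n → ℝ)).withDensity
          (fun x => ENNReal.ofReal (Real.exp (-u x))) →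
        -- X is unconditional
        (∀ ε : Fin n → ℝ, (∀ i, ε i = 1 ∨ ε i = -1) →
          Measure.map (fun ω => fun i => ε i * X ω i) ℙ = Measure.map X ℙ) →
        -- X is isotropic
        (∀ i, ∫ ω, X ω i ∂ℙ = 0) →
        (∀ i j, ∫ ω, X ω i * X ω j ∂ℙ = if i = j then 1 else 0) →
        -- u(x₁^κ, …, xₙ^κ) is convex on the positive orthant
        ConvexOn ℝ {x : Fin n → ℝ | ∀ i, 0 ≤ x i} (fun x => u (fun i => x i ^ κ)) →
        ∀ θ : Fin n → ℝ, (∑ k, (θ k) ^ 2) = 1 →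
        ∀ t : ℝ,
          |(ℙ {ω | t ≤ ∑ k, θ k * X ω k}).toReal
              - ((gaussianReal 0 1) {x | t ≤ x}).toReal|
            ≤ C * ∑ k, |θ k| ^ 3 := by
  refine ⟨360 * (1 + M4 κ) + 22 * (KK κ * M4 κ), ?_, ?_⟩
  · have h1 := M4_pos κ
    have h2 := KK_nonneg hκ
    positivity
  intro n Ω _ _ X u hX hd hs _ h2 hc θ hθ t
  have hG : Good κ (Measure.map X ℙ) u := by
    refine ⟨hκ, Measure.isProbabilityMeasure_map hX.aemeasurable, hd, ?_, hc⟩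
    intro e
    rw [Measure.map_map (flip_meas e) hX]
    refine hs (fun i => sg e i) fun i => ?_
    unfold sg
    cases e i <;> simp
  have e2 : ∀ i, ∫ x, x i ^ 2 ∂(Measure.map X ℙ) = 1 := by
    intro i
    rw [integral_map hX.aemeasurable ((measurable_pi_apply i).pow_const 2).aestronglyMeasurable]
    have := h2 i i
    simp only [if_true] at this
    rw [← this]
    refine integral_congr_ae (Filter.Eventually.of_forall fun ω => ?_)
    simp only
    ring
  have i2 : ∀ i, Integrable (fun x : Fin n → ℝ => x i ^ 2) (Measure.map X ℙ) := by
    intro i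
    by_contra hn
    have := integral_undef hn
    rw [e2 i] at this
    exact one_ne_zero this
  have := core hG i2 e2 θ hθ t
  rw [Q_gauss]
  rw [Measure.map_apply hX (measurableSet_le measurable_const (by fun_prop))] at this
  exact this

end CLTU

/-- Berry-Esseen type theorem for unconditional isotropic random vectors whose density
`e^{-u}` satisfies that `u(x₁^κ, …, xₙ^κ)` is convex on the positive orthant. -/
theorem clt_unconditional (κ : ℝ) (hκ : 1 < κ) :
    ∃ C : ℝ, 0 < C ∧
      ∀ (n : ℕ) (Ω : Type) [MeasureSpace Ω] [IsProbabilityMeasure (ℙ : Measure Ω)]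
        (X : Ω → Fin n → ℝ) (u : (Fin n → ℝ) → ℝ),
        Measurable X →
        -- X has density e^{-u(x)}
        Measure.map X ℙ = (volume : Measure (Fin n → ℝ)).withDensity
          (fun x => ENNReal.ofReal (Real.exp (-u x))) →
        -- X is unconditional
        (∀ ε : Fin n → ℝ, (∀ i, ε i = 1 ∨ ε i = -1) →
          Measure.map (fun ω => fun i => ε i * X ω i) ℙ = Measure.map X ℙ) →
        -- X is isotropic
        (∀ i, ∫ ω, X ω i ∂ℙ = 0) →
        (∀ i j, ∫ ω, X ω i * X ω j ∂ℙ = if i = j then 1 else 0) →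
        -- u(x₁^κ, …, xₙ^κ) is convex on the positive orthant
        ConvexOn ℝ {x : Fin n → ℝ | ∀ i, 0 ≤ x i} (fun x => u (fun i => x i ^ κ)) →
        ∀ θ : Fin n → ℝ, (∑ k, (θ k) ^ 2) = 1 →
        ∀ t : ℝ,
          |(ℙ {ω | t ≤ ∑ k, θ k * X ω k}).toReal
              - ((gaussianReal 0 1) {x | t ≤ x}).toReal|
            ≤ C * ∑ k, |θ k| ^ 3 := CLTU.main_aux κ hκ
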